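/- arXiv:1508.04675 — 3 statements merged into one kernel-verified Lean document; each statement's English description precedes it below -/
import Mathlib

section
/- For every d-regular graph G on n vertices and every λ > 0, the occupancy fraction of the hard-core model satisfies α_G(λ) ≤ λ(1+λ)^{d-1} / (2(1+λ)^d − 1). -/
open Finset
open scoped Classical

/-- The independence polynomial of a graph: the sum of `x ^ |I|` over all
independent sets `I` (including the empty set). -/
noncomputable def indepPoly {V : Type*} [Fintype V] (G : SimpleGraph V) (x : ℝ) : ℝ :=
  ∑ s ∈ Finset.univ.powerset.filter
      (fun s : Finset V => ∀ u ∈ s, ∀ v ∈ s, ¬ G.Adj u v), x ^ s.card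

/-!
Choose an independent set `I` of `G` from the hard-core model at fugacity `x`, and fix a vertex
`v` of degree `d`. Conditionally on `I` meeting the neighbourhood `S` of `v`, the expected size
of `I ∩ S` is at most `d x (1 + x) ^ (d - 1) / ((1 + x) ^ d - 1)`, its value when `I` is drawn
from all sets of vertices with weight `x ^ |I|`. Moreover `v` is occupied with probability
`x / (1 + x)` given that `I` misses `S`, and never otherwise, so the bound is a linear inequality
between the occupation probabilities of `v` and of its neighbours. In a regular graph, summing
it over `v` gives the theorem.

The conditional bound holds for every lower set of finsets. Conditioning on `I ∩ S ≠ ∅` destroys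
the lattice structure that the FKG inequality needs, but picking a uniformly random element `u`
of `I ∩ S` restores it: given `u`, a set `I` has weight proportional to `x ^ |I| / |I ∩ S|` on
the sets containing `u`, which is log-supermodular. The normalizing constant does not depend on
`u ∈ S`, so the FKG inequalities for the various `u` can be added.
-/

theorem fkg_antitone {L R : Type*} [DistribLattice L] [Fintype L] [CommRing R] [LinearOrder R]
    [IsStrictOrderedRing R] {μ f g : L → R} (hμ₀ : 0 ≤ μ) (hf₀ : 0 ≤ f) (hf : Monotone f)
    (hg : Antitone g) (hμ : ∀ a b, μ a * μ b ≤ μ (a ⊓ b) * μ (a ⊔ b)) :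
    (∑ a, μ a) * ∑ a, μ a * (f a * g a) ≤ (∑ a, μ a * f a) * ∑ a, μ a * g a := by
  obtain ⟨C, hC⟩ := Finite.exists_le g
  have key := fkg f (fun a ↦ C - g a) μ hμ₀ hf₀ (fun a ↦ sub_nonneg.2 (hC a)) hf
    (fun _ _ hab ↦ sub_le_sub_left (hg hab) C) hμ
  simp only [mul_sub, sum_sub_distrib, ← mul_assoc, ← sum_mul] at key ⊢
  linarith

section SetSums

variable {α R : Type*} [DecidableEq α]

lemma card_inter_mul_card_union_le (A B : Finset α) : #(A ∩ B) * #(A ∪ B) ≤ #A * #B := by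
  obtain ⟨a, ha⟩ := Nat.exists_eq_add_of_le (card_le_card (inter_subset_left (s₁ := A) (s₂ := B)))
  obtain ⟨b, hb⟩ := Nat.exists_eq_add_of_le (card_le_card (inter_subset_right (s₁ := A) (s₂ := B)))
  have hunion : #(A ∪ B) = #(A ∩ B) + a + b := by
    have := card_inter_add_card_union A B
    lia
  rw [hunion, ha, hb]
  nlinarith [Nat.zero_le (a * b)]

lemma card_inter_pos_of_mem {I S : Finset α} {u : α} (hS : u ∈ S) (hI : u ∈ I) : 0 < #(I ∩ S) :=
  card_pos.2 ⟨u, mem_inter.2 ⟨hI, hS⟩⟩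

lemma sum_sum_filter_mem [NonAssocSemiring R] (𝒜 : Finset (Finset α)) (S : Finset α)
    (f : Finset α → R) :
    ∑ u ∈ S, ∑ I ∈ 𝒜 with u ∈ I, f I = ∑ I ∈ 𝒜, #(I ∩ S) * f I := by
  simp only [sum_filter]
  rw [sum_comm]
  refine sum_congr rfl fun I _ ↦ ?_
  rw [sum_ite_mem, sum_const, nsmul_eq_mul, inter_comm]

variable [Fintype α]

lemma sum_pow_card_disjoint [CommSemiring R] (S : Finset α) (x : R) :
    ∑ I with Disjoint I S, x ^ #I = (1 + x) ^ #Sᶜ := by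
  have hfilter : univ.filter (Disjoint · S) = Sᶜ.powerset := by
    ext I
    simp [subset_compl_iff_disjoint_right]
  rw [hfilter, ← prod_const, prod_one_add]
  simp only [prod_const]

variable [CommRing R]

lemma sum_pow_card_not_disjoint (S : Finset α) (x : R) :
    ∑ I with ¬Disjoint I S, x ^ #I = (1 + x) ^ #Sᶜ * ((1 + x) ^ #S - 1) := by
  have htotal := sum_filter_add_sum_filter_not univ (fun I : Finset α ↦ Disjoint I S) (x ^ #·)
  have hempty := sum_pow_card_disjoint ∅ x (α := α)
  simp only [disjoint_empty_right, filter_true, compl_empty, card_univ,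
    ← card_compl_add_card S, pow_add] at hempty
  rw [sum_pow_card_disjoint, hempty] at htotal
  linear_combination htotal

lemma sum_pow_card_mem (u : α) (x : R) :
    ∑ I with u ∈ I, x ^ #I = x * (1 + x) ^ (Fintype.card α - 1) := by
  have := sum_pow_card_not_disjoint {u} x
  simp only [disjoint_singleton_right, not_not, card_compl, card_singleton] at this
  linear_combination this

end SetSums

section SizeBiasing

variable {α K : Type*} [DecidableEq α] [Field K]

/-- The weight `x ^ #I` of the Bernoulli product measure, restricted to the sets `I` containing `u`
and divided by `#(I ∩ S)`. For `u ∈ S`, this is up to normalization the law of a random set `I`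
meeting `S`, conditioned on a uniformly random element of `I ∩ S` being `u`. -/
def sizeBiasedWeight (S : Finset α) (x : K) (u : α) (I : Finset α) : K :=
  if u ∈ I then x ^ #I / #(I ∩ S) else 0

variable {S : Finset α} {x : K} {u v : α}

lemma sizeBiasedWeight_mul_card_inter [CharZero K] (hu : u ∈ S) (I : Finset α) :
    sizeBiasedWeight S x u I * #(I ∩ S) = if u ∈ I then x ^ #I else 0 := by
  unfold sizeBiasedWeight
  split_ifs with hI
  · have : (#(I ∩ S) : K) ≠ 0 := by exact_mod_cast (card_inter_pos_of_mem hu hI).ne'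
    exact div_mul_cancel₀ _ this
  · exact zero_mul _

lemma sum_sizeBiasedWeight_mul [Fintype α] [CharZero K] (S : Finset α) (x : K)
    (f : Finset α → K) :
    ∑ u ∈ S, ∑ I, sizeBiasedWeight S x u I * f I = ∑ I with ¬Disjoint I S, x ^ #I * f I := by
  rw [sum_comm, sum_filter]
  refine sum_congr rfl fun I _ ↦ ?_
  simp only [sizeBiasedWeight, ← sum_mul, sum_ite_mem, sum_const, nsmul_eq_mul, inter_comm S]
  split_ifs with hI
  · simp [disjoint_iff_inter_eq_empty.1 hI]
  · have : (#(I ∩ S) : K) ≠ 0 := by simpa [disjoint_iff_inter_eq_empty] using hI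
    rw [mul_div_cancel₀ _ this]

lemma sum_sizeBiasedWeight_eq [Fintype α] (hu : u ∈ S) (hv : v ∈ S) :
    ∑ I, sizeBiasedWeight S x u I = ∑ I, sizeBiasedWeight S x v I := by
  have hS : S.map (Equiv.swap u v).toEmbedding = S := by
    ext w
    rw [mem_map_equiv, Equiv.symm_swap]
    grind
  refine Fintype.sum_equiv (Equiv.swap u v).finsetCongr _ _ fun I ↦ ?_
  have hcard : #(I.map (Equiv.swap u v).toEmbedding ∩ S) = #(I ∩ S) := by
    conv_lhs => rw [← hS, ← map_inter, card_map]
  simp [sizeBiasedWeight, hcard]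

variable [LinearOrder K] [IsStrictOrderedRing K]

lemma sizeBiasedWeight_nonneg (hx : 0 ≤ x) (S : Finset α) (u : α) :
    0 ≤ sizeBiasedWeight S x u := fun I ↦ by
  unfold sizeBiasedWeight
  split_ifs <;> positivity

lemma sizeBiasedWeight_mul_le_inter_union (hx : 0 ≤ x) (hu : u ∈ S) (I J : Finset α) :
    sizeBiasedWeight S x u I * sizeBiasedWeight S x u J ≤
      sizeBiasedWeight S x u (I ∩ J) * sizeBiasedWeight S x u (I ∪ J) := by
  by_cases h : u ∈ I ∩ J
  · obtain ⟨hI, hJ⟩ := mem_inter.1 h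
    have hIJ : u ∈ I ∪ J := mem_union_left J hI
    have hcard : (#(I ∩ J ∩ S) * #((I ∪ J) ∩ S) : K) ≤ #(I ∩ S) * #(J ∩ S) := by
      rw [inter_inter_distrib_right, union_inter_distrib_right]
      exact_mod_cast card_inter_mul_card_union_le (I ∩ S) (J ∩ S)
    have hinter := card_inter_pos_of_mem hu h
    have hunion := card_inter_pos_of_mem hu hIJ
    simp only [sizeBiasedWeight, if_pos hI, if_pos hJ, if_pos h, if_pos hIJ, div_mul_div_comm,
      ← pow_add, card_inter_add_card_union]
    gcongr
  · have hzero : sizeBiasedWeight S x u I * sizeBiasedWeight S x u J = 0 := by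
      simp only [mem_inter] at h
      simp only [sizeBiasedWeight]
      grind
    rw [hzero]
    exact mul_nonneg (sizeBiasedWeight_nonneg hx S u _) (sizeBiasedWeight_nonneg hx S u _)

lemma sum_sizeBiasedWeight_mul_sum_mem_le [Fintype α] {g : Finset α → K}
    (hx : 0 ≤ x) (hu : u ∈ S) (hg : Antitone g) :
    (∑ I, sizeBiasedWeight S x u I) * ∑ I with u ∈ I, x ^ #I * g I ≤
      x * (1 + x) ^ (Fintype.card α - 1) * ∑ I, sizeBiasedWeight S x u I * g I := by
  have hmono : Monotone fun I : Finset α ↦ (#(I ∩ S) : K) := fun I J hIJ ↦ by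
    dsimp only
    gcongr
  have key := fkg_antitone (sizeBiasedWeight_nonneg hx S u) (fun I ↦ Nat.cast_nonneg _) hmono hg
    (sizeBiasedWeight_mul_le_inter_union hx hu)
  simpa only [← mul_assoc, sizeBiasedWeight_mul_card_inter hu, ite_mul, zero_mul, ← sum_filter,
    sum_pow_card_mem] using key

lemma sum_not_disjoint_mul_sum_card_inter_le [Fintype α] {g : Finset α → K}
    (hx : 0 ≤ x) (S : Finset α) (hg : Antitone g) :
    (∑ I with ¬Disjoint I S, x ^ #I) * ∑ I, #(I ∩ S) * (x ^ #I * g I) ≤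
      #S * (x * (1 + x) ^ (Fintype.card α - 1)) * ∑ I with ¬Disjoint I S, x ^ #I * g I := by
  have hmass (u : α) (hu : u ∈ S) :
      ∑ I with ¬Disjoint I S, x ^ #I = #S * ∑ I, sizeBiasedWeight S x u I := by
    have := sum_sizeBiasedWeight_mul S x 1
    simp only [Pi.one_apply, mul_one] at this
    rw [← this, sum_congr rfl fun v hv ↦ sum_sizeBiasedWeight_eq hv hu, sum_const, nsmul_eq_mul]
  rw [← sum_sum_filter_mem, ← sum_sizeBiasedWeight_mul, mul_sum, mul_sum]
  refine sum_le_sum fun u hu ↦ ?_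
  rw [hmass u hu, mul_assoc, mul_assoc]
  exact mul_le_mul_of_nonneg_left (sum_sizeBiasedWeight_mul_sum_mem_le hx hu hg) (by positivity)

theorem sum_card_inter_mul_le_of_antitone [Fintype α] {g : Finset α → K}
    (hx : 0 ≤ x) (S : Finset α) (hg : Antitone g) :
    ((1 + x) ^ #S - 1) * ∑ I, #(I ∩ S) * (x ^ #I * g I) ≤
      #S * (x * (1 + x) ^ (#S - 1)) * ∑ I with ¬Disjoint I S, x ^ #I * g I := by
  obtain rfl | hS := S.eq_empty_or_nonempty
  · simp
  have hcard : Fintype.card α - 1 = #Sᶜ + (#S - 1) := by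
    have := card_compl_add_card S
    have := hS.card_pos
    lia
  have key := sum_not_disjoint_mul_sum_card_inter_le hx S hg
  rw [sum_pow_card_not_disjoint, hcard, pow_add] at key
  have hpos : 0 < (1 + x) ^ #Sᶜ := by positivity
  refine le_of_mul_le_mul_left ?_ hpos
  linarith

theorem sum_card_inter_mul_le_of_isLowerSet [Finite α] {𝒜 : Finset (Finset α)}
    (hx : 0 ≤ x) (S : Finset α) (h𝒜 : IsLowerSet (𝒜 : Set (Finset α))) :
    ((1 + x) ^ #S - 1) * ∑ I ∈ 𝒜, #(I ∩ S) * x ^ #I ≤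
      #S * (x * (1 + x) ^ (#S - 1)) * ∑ I ∈ 𝒜 with ¬Disjoint I S, x ^ #I := by
  cases nonempty_fintype α
  have hanti : Antitone fun I ↦ if I ∈ 𝒜 then (1 : K) else 0 := fun I J hIJ ↦ by
    have : J ∈ 𝒜 → I ∈ 𝒜 := fun hJ ↦ mem_coe.1 (h𝒜 hIJ hJ)
    dsimp only
    split_ifs <;> simp_all
  have key := sum_card_inter_mul_le_of_antitone hx S hanti
  simpa only [mul_boole, mul_ite, mul_zero, mul_one, sum_ite_mem, univ_inter, ← filter_inter,
    filter_inter] using key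

end SizeBiasing

section HardCore

variable {V : Type*} [Fintype V] (G : SimpleGraph V)

/-- The family of independent sets over which `indepPoly G` sums, described by Mathlib's
`SimpleGraph.IsIndepSet`. -/
noncomputable def indepSets : Finset (Finset V) := {I : Finset V | G.IsIndepSet (I : Set V)}

variable {G} in
lemma mem_indepSets {I : Finset V} : I ∈ indepSets G ↔ G.IsIndepSet (I : Set V) :=
  mem_filter_univ I

lemma isLowerSet_indepSets : IsLowerSet (indepSets G : Set (Finset V)) := fun _ _ hJI hI ↦
  mem_coe.2 <| mem_indepSets.2 <| (mem_indepSets.1 hI).mono (coe_subset.2 hJI)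

lemma indepPoly_eq_sum (x : ℝ) : indepPoly G x = ∑ I ∈ indepSets G, x ^ #I := by
  refine sum_congr ?_ fun _ _ ↦ rfl
  ext I
  simp only [powerset_univ, mem_filter_univ, mem_indepSets, SimpleGraph.isIndepSet_iff,
    Set.Pairwise, mem_coe]
  grind [SimpleGraph.irrefl]

lemma indepPoly_pos {x : ℝ} (hx : 0 ≤ x) : 0 < indepPoly G x := by
  rw [indepPoly_eq_sum]
  exact sum_pos' (fun I _ ↦ by positivity) ⟨∅, by simp [mem_indepSets]⟩

/-- The contribution to `indepPoly G x` of the independent sets containing `v`, that is,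
`indepPoly G x` times the probability that `v` is occupied in the hard-core model at fugacity
`x`. -/
noncomputable def vertexWeight (x : ℝ) (v : V) : ℝ :=
  ∑ I ∈ indepSets G with v ∈ I, x ^ #I

lemma vertexWeight_nonneg {x : ℝ} (hx : 0 ≤ x) (v : V) : 0 ≤ vertexWeight G x v := by
  unfold vertexWeight
  positivity

lemma sum_vertexWeight (S : Finset V) (x : ℝ) :
    ∑ v ∈ S, vertexWeight G x v = ∑ I ∈ indepSets G, #(I ∩ S) * x ^ #I :=
  sum_sum_filter_mem (indepSets G) S (x ^ #·)

lemma mul_deriv_indepPoly (x : ℝ) : x * deriv (indepPoly G) x = ∑ v, vertexWeight G x v := by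
  have hderiv : HasDerivAt (indepPoly G) (∑ I ∈ indepSets G, #I * x ^ (#I - 1)) x := by
    rw [funext (indepPoly_eq_sum G)]
    exact HasDerivAt.fun_sum fun I _ ↦ hasDerivAt_pow #I x
  rw [hderiv.deriv, sum_vertexWeight, mul_sum]
  refine sum_congr rfl fun I _ ↦ ?_
  rw [inter_univ]
  obtain h | h := eq_or_ne #I 0
  · simp [h]
  · rw [mul_left_comm, mul_pow_sub_one h]

lemma insert_mem_indepSets {v : V} {I : Finset V} (hv : v ∉ I) :
    insert v I ∈ indepSets G ↔ I ∈ indepSets G ∧ Disjoint I (G.neighborFinset v) := by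
  rw [mem_indepSets, mem_indepSets, coe_insert, SimpleGraph.IsIndepSet, SimpleGraph.IsIndepSet,
    Set.pairwise_insert_of_notMem (mem_coe.not.2 hv)]
  simp [disjoint_left, G.adj_comm _ v]

lemma disjoint_neighborFinset_of_mem_indepSets {v : V} {I : Finset V} (hI : I ∈ indepSets G)
    (hv : v ∈ I) : Disjoint I (G.neighborFinset v) := by
  rw [← insert_erase hv] at hI ⊢
  rw [disjoint_insert_left]
  exact ⟨G.notMem_neighborFinset_self v, ((insert_mem_indepSets G (notMem_erase v I)).1 hI).2⟩

lemma mul_sum_disjoint_neighborFinset_notMem (x : ℝ) (v : V) :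
    x * ∑ I ∈ indepSets G with Disjoint I (G.neighborFinset v) ∧ v ∉ I, x ^ #I =
      vertexWeight G x v := by
  rw [mul_sum]
  refine sum_nbij' (insert v) (erase · v) ?_ ?_ ?_ ?_ ?_ <;> simp only [mem_filter]
  · exact fun I ⟨hI, hd, hv⟩ ↦ ⟨(insert_mem_indepSets G hv).2 ⟨hI, hd⟩, mem_insert_self v I⟩
  · intro I ⟨hI, hv⟩
    have hv' := notMem_erase v I
    rw [← insert_erase hv, insert_mem_indepSets G hv'] at hI
    exact ⟨hI.1, hI.2, hv'⟩
  · exact fun I ⟨_, _, hv⟩ ↦ erase_insert hv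
  · exact fun I ⟨_, hv⟩ ↦ insert_erase hv
  · intro I ⟨_, _, hv⟩
    rw [card_insert_of_notMem hv, pow_succ']

lemma mul_sum_disjoint_neighborFinset (x : ℝ) (v : V) :
    x * ∑ I ∈ indepSets G with Disjoint I (G.neighborFinset v), x ^ #I =
      (1 + x) * vertexWeight G x v := by
  have hocc : ∑ I ∈ indepSets G with Disjoint I (G.neighborFinset v) ∧ v ∈ I, x ^ #I =
      vertexWeight G x v :=
    sum_congr (filter_congr fun I hI ↦
      and_iff_right_of_imp (disjoint_neighborFinset_of_mem_indepSets G hI)) fun _ _ ↦ rfl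
  rw [← sum_filter_add_sum_filter_not _ (v ∈ ·), filter_filter, filter_filter, hocc, mul_add,
    mul_sum_disjoint_neighborFinset_notMem]
  ring

lemma mul_sum_not_disjoint_neighborFinset (x : ℝ) (v : V) :
    x * ∑ I ∈ indepSets G with ¬Disjoint I (G.neighborFinset v), x ^ #I =
      x * indepPoly G x - (1 + x) * vertexWeight G x v := by
  rw [← mul_sum_disjoint_neighborFinset, indepPoly_eq_sum, ← mul_sub,
    ← sum_filter_add_sum_filter_not (indepSets G) (Disjoint · (G.neighborFinset v)),
    add_sub_cancel_left]

lemma one_add_mul_vertexWeight_le {x : ℝ} (hx : 0 ≤ x) (v : V) :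
    (1 + x) * vertexWeight G x v ≤ x * indepPoly G x := by
  rw [← sub_nonneg, ← mul_sum_not_disjoint_neighborFinset]
  positivity

theorem sum_vertexWeight_neighborFinset_le {x : ℝ} (hx : 0 ≤ x) (v : V) :
    ((1 + x) ^ G.degree v - 1) * ∑ u ∈ G.neighborFinset v, vertexWeight G x u ≤
      G.degree v * ((1 + x) ^ (G.degree v - 1) *
        (x * indepPoly G x - (1 + x) * vertexWeight G x v)) := by
  have key := sum_card_inter_mul_le_of_isLowerSet hx (G.neighborFinset v) (isLowerSet_indepSets G)
  rw [G.card_neighborFinset_eq_degree] at key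
  rw [sum_vertexWeight, ← mul_sum_not_disjoint_neighborFinset]
  linarith

lemma sum_sum_neighborFinset {R : Type*} [NonAssocSemiring R] (f : V → R) :
    ∑ v, ∑ u ∈ G.neighborFinset v, f u = ∑ u, G.degree u * f u := by
  rw [sum_comm' (t' := univ) (s' := fun u ↦ G.neighborFinset u) (by simp [G.adj_comm])]
  simp

variable {G}

theorem pow_sub_one_mul_sum_vertexWeight_le {d : ℕ} (hreg : G.IsRegularOfDegree d) {x : ℝ}
    (hx : 0 ≤ x) :
    ((1 + x) ^ d - 1) * ∑ v, vertexWeight G x v ≤ (1 + x) ^ (d - 1) *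
      (x * (Fintype.card V * indepPoly G x) - (1 + x) * ∑ v, vertexWeight G x v) := by
  have hslack : ∑ v, (x * indepPoly G x - (1 + x) * vertexWeight G x v) =
      x * (Fintype.card V * indepPoly G x) - (1 + x) * ∑ v, vertexWeight G x v := by
    rw [sum_sub_distrib, sum_const, card_univ, nsmul_eq_mul, mul_left_comm, mul_sum]
  rw [← hslack]
  -- The bound at each vertex carries a factor `d`, so it is void when `d = 0`.
  obtain rfl | hd := eq_or_ne d 0
  · rw [pow_zero, sub_self, zero_mul]
    have (v : V) := sub_nonneg.2 (one_add_mul_vertexWeight_le G hx v)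
    exact mul_nonneg (by positivity) (sum_nonneg fun v _ ↦ this v)
  have hsum := sum_le_sum fun v (_ : v ∈ univ) ↦ sum_vertexWeight_neighborFinset_le G hx v
  simp only [hreg.degree_eq, ← mul_sum, sum_sum_neighborFinset] at hsum
  have hd' : (0 : ℝ) < d := by positivity
  exact le_of_mul_le_mul_left (by rwa [mul_left_comm] at hsum) hd'

theorem sum_vertexWeight_le {d : ℕ} (hreg : G.IsRegularOfDegree d) {x : ℝ} (hx : 0 ≤ x) :
    (2 * (1 + x) ^ d - 1) * ∑ v, vertexWeight G x v ≤
      x * (1 + x) ^ (d - 1) * (Fintype.card V * indepPoly G x) := by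
  have hpow : (1 + x) ^ d ≤ (1 + x) ^ (d - 1) * (1 + x) := by
    rw [← pow_succ]
    exact pow_le_pow_right₀ (by linarith) (by lia)
  have hnonneg : 0 ≤ ∑ v, vertexWeight G x v := sum_nonneg fun v _ ↦ vertexWeight_nonneg G hx v
  linarith [pow_sub_one_mul_sum_vertexWeight_le hreg hx, mul_le_mul_of_nonneg_right hpow hnonneg]

end HardCore

/-- For every $d$-regular graph $G$ and every $\lambda > 0$, the occupancy
fraction of the hard-core model on $G$ is at most that of $K_{d,d}$, namely
$\lambda(1+\lambda)^{d-1}/(2(1+\lambda)^d-1)$. -/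
theorem occupancyFraction_le {V : Type*} [Fintype V] (G : SimpleGraph V) (d : ℕ)
    (hreg : G.IsRegularOfDegree d) (x : ℝ) (hx : 0 < x) :
    (1 / (Fintype.card V : ℝ)) * (x * deriv (indepPoly G) x / indepPoly G x)
      ≤ x * (1 + x) ^ (d - 1) / (2 * (1 + x) ^ d - 1) := by
  have hpos := indepPoly_pos G hx.le
  have hpow : 1 ≤ (1 + x) ^ d := one_le_pow₀ (by linarith)
  have hden : 0 < 2 * (1 + x) ^ d - 1 := by linarith
  rw [mul_deriv_indepPoly, div_mul_div_comm, one_mul]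
  refine div_le_of_le_mul₀ (by positivity) (by positivity) ?_
  rw [div_mul_eq_mul_div, le_div_iff₀ hden, mul_comm]
  exact sum_vertexWeight_le hreg hx.le
end

section
/- For every d-regular graph G on n vertices and every λ > 0, (1/|E(G)|) log M_G(λ) ≤ (1/d²) log M_{K_{d,d}}(λ), where M denotes the matching polynomial. -/
open Finset
open scoped Classical

/-- The finset of matchings of a graph, viewed as finsets of edges that are
pairwise vertex-disjoint (the empty matching included). -/
noncomputable def matchingsFinset {V : Type*} [Fintype V] [DecidableEq V]
    (G : SimpleGraph V) : Finset (Finset (Sym2 V)) :=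
  Finset.univ.powerset.filter (fun M : Finset (Sym2 V) =>
    (∀ e ∈ M, e ∈ G.edgeSet) ∧ ∀ e ∈ M, ∀ f ∈ M, e ≠ f → ∀ v : V, v ∈ e → v ∉ f)

/-- The matching polynomial of a graph: the sum of `x ^ |H|` over all matchings
`H` (including the empty matching). -/
noncomputable def matchingPoly {V : Type*} [Fintype V] [DecidableEq V]
    (G : SimpleGraph V) (x : ℝ) : ℝ :=
  ∑ M ∈ matchingsFinset G, x ^ M.card

/-!
The logarithmic derivative of `M_G` is the mean number of edges of a random matching divided by `x`,
so, both matching polynomials being `1` at `0`, it suffices to bound this mean, per edge of `G`, by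
its value for `K_{d,d}`. Put `D = d - 1`. For an edge `uv`, condition on a random matching `F` of
`G - u - v`: if `u` and `v` have `i` and `j` further free neighbours, `k` of them common, then
`M_G(x) / M_{G-u-v}(x)` is the mean of `1 + (i + j + 1) x + (i j - k) x²`.

The only other fact about `G` needed is that a uniformly random neighbour of `u` is free with
probability `t / d` when `u` has `t` free neighbours. Imposing it with one multiplier for each `t`
gives a linear program with an explicit dual solution, built from the means `X i` of the Laguerre
values `L_{max A - 1}(-1/x)` over the `i`-subsets `A` of `{1, …, D}`. The dual constraints of
`K_{d,d}`, where `i = j` and `k = 0`, are then equalities, and in general the slack is `x / 2` times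
`(X i - X j) (i - j) + k (X i - X (i - 1)) + k (X j - X (j - 1))`, which is nonnegative because `X`
is increasing.
-/

section Counting

lemma cast_mul_pred_of_le {k n : ℕ} (h : k ≤ n) : (k : ℝ) * (n - 1 : ℕ) = k * (n - 1) := by
  rcases k.eq_zero_or_pos with rfl | hk
  · simp
  · rw [Nat.cast_pred (hk.trans_le h)]

lemma sum_card_erase {α : Type*} [DecidableEq α] (I J : Finset α) (φ : ℕ → ℝ) :
    ∑ a ∈ J, φ #(I.erase a)
      = (#J - #(I ∩ J)) * φ #I + #(I ∩ J) * φ (#I - 1) := by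
  have hin : ∑ a ∈ I ∩ J, φ #(I.erase a) = #(I ∩ J) * φ (#I - 1) := by
    rw [← nsmul_eq_mul, ← sum_const]
    exact sum_congr rfl fun a ha => by rw [card_erase_of_mem (mem_inter.1 ha).1]
  have hcard : (#(J \ I) : ℝ) = #J - #(I ∩ J) := by
    rw [card_sdiff, Nat.cast_sub (card_le_card inter_subset_right)]
  have hout : ∑ a ∈ J \ I, φ #(I.erase a) = (#J - #(I ∩ J)) * φ #I := by
    rw [← hcard, ← nsmul_eq_mul, ← sum_const]
    exact sum_congr rfl fun a ha => by rw [erase_eq_of_notMem (mem_sdiff.1 ha).2]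
  rw [← sum_inter_add_sum_sdiff J I, inter_comm J I, hin, hout, add_comm]

end Counting

section Binomial

lemma cast_choose_succ_mul (n k : ℕ) :
    (n.choose (k + 1) : ℝ) * (k + 1) = n.choose k * (n - k) := by
  rcases le_or_gt k n with h | h
  · exact_mod_cast n.choose_succ_right_eq k
  · simp [Nat.choose_eq_zero_of_lt h, Nat.choose_eq_zero_of_lt (h.trans k.lt_succ_self)]

lemma cast_succ_choose_mul_sub (n k : ℕ) :
    ((n + 1).choose k : ℝ) * (n + 1 - k) = n.choose k * (n + 1) := by
  have habsorb : ((n : ℝ) + 1) * n.choose k = (n + 1).choose (k + 1) * (k + 1) := by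
    exact_mod_cast n.add_one_mul_choose_eq k
  have hstep := cast_choose_succ_mul (n + 1) k
  push_cast at hstep
  linarith

lemma choose_div_choose_le_of_le {n m i j : ℕ} (hmn : m ≤ n) (hij : i ≤ j) (hjn : j ≤ n) :
    (m.choose j : ℝ) / n.choose j ≤ m.choose i / n.choose i := by
  have hcross : m.choose j * n.choose i ≤ m.choose i * n.choose j := by
    refine Nat.le_of_mul_le_mul_right ?_ (Nat.choose_pos hij)
    calc m.choose j * n.choose i * j.choose i
        = m.choose i * n.choose i * (m - i).choose (j - i) := by
          rw [mul_right_comm, Nat.choose_mul hij, mul_right_comm]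
      _ ≤ m.choose i * n.choose i * (n - i).choose (j - i) :=
          Nat.mul_le_mul_left _ (Nat.choose_le_choose _ (Nat.sub_le_sub_right hmn i))
      _ = m.choose i * n.choose j * j.choose i := by
          rw [mul_assoc, ← Nat.choose_mul hij, mul_assoc]
  rw [div_le_div_iff₀ (mod_cast Nat.choose_pos hjn) (mod_cast Nat.choose_pos (hij.trans hjn))]
  exact_mod_cast hcross

end Binomial

section Laguerre

/-- The Laguerre polynomial `L_n` at `-y`: the matching polynomial of `K_{n,n}` at `x` is
`n! * x ^ n * L_n(-1/x)`. -/
noncomputable def laguerreNeg (n : ℕ) (y : ℝ) : ℝ :=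
  ∑ k ∈ range (n + 1), n.choose k * y ^ k / k.factorial

/-- The increments `L_n(-y) - L_{n-1}(-y)` (with `L_{-1} = 0`), expanded so that their
nonnegativity for `y ≥ 0` is visible. -/
noncomputable def laguerreIncrement : ℕ → ℝ → ℝ
  | 0, _ => 1
  | n + 1, y => ∑ k ∈ range (n + 1), n.choose k * y ^ (k + 1) / (k + 1).factorial

lemma laguerreIncrement_nonneg {y : ℝ} (hy : 0 ≤ y) : ∀ n, 0 ≤ laguerreIncrement n y
  | 0 => zero_le_one
  | n + 1 => sum_nonneg fun k _ => by positivity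

lemma laguerreNeg_succ (n : ℕ) (y : ℝ) :
    laguerreNeg (n + 1) y = laguerreNeg n y + laguerreIncrement (n + 1) y := by
  have hextend : laguerreNeg n y = ∑ k ∈ range (n + 2), n.choose k * y ^ k / k.factorial := by
    rw [sum_range_succ, laguerreNeg]
    simp
  rw [hextend, laguerreNeg, laguerreIncrement, sum_range_succ', sum_range_succ' _ (n + 1),
    add_right_comm, ← sum_add_distrib]
  congr 1
  · refine sum_congr rfl fun k _ => ?_
    rw [Nat.choose_succ_succ']
    push_cast
    ring
  · simp

lemma sum_laguerreIncrement (n : ℕ) (y : ℝ) :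
    ∑ j ∈ range (n + 1), laguerreIncrement j y = laguerreNeg n y := by
  induction n with
  | zero => simp [laguerreIncrement, laguerreNeg]
  | succ n ih => rw [sum_range_succ, ih, laguerreNeg_succ]

lemma succ_mul_laguerreIncrement_succ (n : ℕ) (y : ℝ) :
    (n + 1) * laguerreIncrement (n + 1) y
      = n * laguerreIncrement n y + y * laguerreNeg n y := by
  cases n with
  | zero => simp [laguerreIncrement, laguerreNeg]
  | succ n =>
    have hextend : laguerreIncrement (n + 1) y
        = ∑ k ∈ range (n + 2), n.choose k * y ^ (k + 1) / (k + 1).factorial := by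
      rw [sum_range_succ, laguerreIncrement]
      simp
    rw [hextend, laguerreIncrement, laguerreNeg, mul_sum, mul_sum, mul_sum, ← sum_add_distrib]
    refine sum_congr rfl fun k _ => ?_
    have hchoose := cast_succ_choose_mul_sub n k
    rw [Nat.factorial_succ]
    push_cast
    field_simp
    linear_combination y ^ (k + 1) * hchoose

end Laguerre

section Biclique

/-- The matching polynomial of the complete bipartite graph `K_{d,d}`. -/
noncomputable def bicliqueMatchingPoly (d : ℕ) (x : ℝ) : ℝ :=
  ∑ k ∈ range (d + 1), ((d.choose k) ^ 2 * k.factorial : ℝ) * x ^ k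

lemma one_le_bicliqueMatchingPoly (d : ℕ) {x : ℝ} (hx : 0 ≤ x) :
    1 ≤ bicliqueMatchingPoly d x := by
  rw [bicliqueMatchingPoly, sum_range_succ']
  simpa using sum_nonneg fun k _ => by positivity

lemma bicliqueMatchingPoly_zero (d : ℕ) : bicliqueMatchingPoly d 0 = 1 := by
  simp [bicliqueMatchingPoly, sum_range_succ']

lemma bicliqueMatchingPoly_eq_laguerreNeg (d : ℕ) {x : ℝ} (hx : x ≠ 0) :
    bicliqueMatchingPoly d x = d.factorial * x ^ d * laguerreNeg d x⁻¹ := by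
  rw [bicliqueMatchingPoly, laguerreNeg, ← sum_range_reflect, mul_sum]
  refine sum_congr rfl fun k hk => ?_
  have hkd : k ≤ d := Nat.lt_succ_iff.1 (mem_range.1 hk)
  have hfact : (d.choose k * k.factorial * (d - k).factorial : ℝ) = d.factorial :=
    mod_cast Nat.choose_mul_factorial_mul_factorial hkd
  have hpow : x ^ d = x ^ (d - k) * x ^ k := by rw [← pow_add, Nat.sub_add_cancel hkd]
  rw [Nat.add_sub_cancel, Nat.choose_symm hkd, ← hfact, hpow, inv_pow]
  field_simp

lemma hasDerivAt_bicliqueMatchingPoly (d : ℕ) (x : ℝ) :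
    HasDerivAt (bicliqueMatchingPoly (d + 1)) ((d + 1) ^ 2 * bicliqueMatchingPoly d x) x := by
  have hterms : HasDerivAt (bicliqueMatchingPoly (d + 1)) (∑ k ∈ range (d + 2),
      (((d + 1).choose k) ^ 2 * k.factorial : ℝ) * (k * x ^ (k - 1))) x :=
    HasDerivAt.fun_sum fun k _ => (hasDerivAt_pow k x).const_mul _
  convert hterms using 1
  rw [sum_range_succ', bicliqueMatchingPoly, mul_sum]
  simp only [Nat.cast_zero, zero_mul, mul_zero, add_zero, Nat.add_sub_cancel]
  refine sum_congr rfl fun k _ => ?_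
  have habsorb : ((d : ℝ) + 1) * d.choose k = (d + 1).choose (k + 1) * (k + 1) :=
    mod_cast d.add_one_mul_choose_eq k
  rw [Nat.factorial_succ]
  push_cast
  linear_combination (k.factorial * x ^ k *
    ((d + 1) * d.choose k + (d + 1).choose (k + 1) * (k + 1))) * habsorb

end Biclique

section DualSolution

/-- The mean of `L_{max A - 1}(-y)` over the `i`-element subsets `A` of `{1, …, D}` (zero for
`i = 0`), summed by parts: `1 - j.choose i / D.choose i` is the probability that `max A > j`. -/
noncomputable def laguerreMaxMean (D : ℕ) (y : ℝ) (i : ℕ) : ℝ :=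
  ∑ j ∈ range D, (1 - (j.choose i : ℝ) / D.choose i) * laguerreIncrement j y

lemma laguerreMaxMean_zero (D : ℕ) (y : ℝ) : laguerreMaxMean D y 0 = 0 := by
  simp [laguerreMaxMean]

lemma laguerreMaxMean_le_of_le {D : ℕ} {y : ℝ} (hy : 0 ≤ y) {i j : ℕ} (hij : i ≤ j) (hj : j ≤ D) :
    laguerreMaxMean D y i ≤ laguerreMaxMean D y j :=
  sum_le_sum fun m hm => mul_le_mul_of_nonneg_right
    (sub_le_sub_left (choose_div_choose_le_of_le (mem_range.1 hm).le hij hj) 1)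
    (laguerreIncrement_nonneg hy m)

lemma mul_sum_choose_sub_mul_laguerreIncrement (D i : ℕ) (y : ℝ) :
    y * ∑ j ∈ range D, ((D.choose (i + 1) : ℝ) - j.choose (i + 1)) * laguerreIncrement j y
      = (D - i) * D.choose i * laguerreIncrement D y
        - i * ∑ j ∈ range D, j.choose i * laguerreIncrement j y := by
  induction D with
  | zero => cases i <;> simp
  | succ D ih =>
    have hincr : ∑ j ∈ range (D + 1),
          (((D + 1).choose (i + 1) : ℝ) - j.choose (i + 1)) * laguerreIncrement j y
        = ∑ j ∈ range D, ((D.choose (i + 1) : ℝ) - j.choose (i + 1)) * laguerreIncrement j y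
          + D.choose i * laguerreNeg D y := by
      rw [← sum_laguerreIncrement, sum_range_succ, sum_range_succ, mul_add, mul_sum, ← add_assoc,
        ← sum_add_distrib, Nat.choose_succ_succ']
      push_cast
      congr 1
      · exact sum_congr rfl fun j _ => by ring
      · ring
    have hrec := succ_mul_laguerreIncrement_succ D y
    have hchoose := cast_succ_choose_mul_sub D i
    rw [hincr, mul_add, ih, sum_range_succ]
    push_cast
    linear_combination -(D.choose i : ℝ) * hrec - laguerreIncrement (D + 1) y * hchoose

lemma laguerreMaxMean_succ {D i : ℕ} (hi : i ≤ D) (y : ℝ) :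
    y * ((D - i) * laguerreMaxMean D y (i + 1))
      = (i + 1) * (D * laguerreIncrement D y
        + i * (laguerreMaxMean D y i - laguerreNeg D y)) := by
  have hpos : (0 : ℝ) < D.choose i := mod_cast Nat.choose_pos hi
  have hsucc : ((D : ℝ) - i) * laguerreMaxMean D y (i + 1) * D.choose i
      = (i + 1) * ∑ j ∈ range D,
        ((D.choose (i + 1) : ℝ) - j.choose (i + 1)) * laguerreIncrement j y := by
    rw [laguerreMaxMean, mul_sum, sum_mul, mul_sum]
    refine sum_congr rfl fun j hj => ?_
    rcases hi.eq_or_lt with rfl | hlt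
    · simp [Nat.choose_eq_zero_of_lt ((mem_range.1 hj).trans i.lt_succ_self)]
    · have hpos' : (0 : ℝ) < D.choose (i + 1) := mod_cast Nat.choose_pos hlt
      have hchoose := cast_choose_succ_mul D i
      field_simp
      linear_combination
        -(((D.choose (i + 1) : ℝ) - j.choose (i + 1)) * laguerreIncrement j y) * hchoose
  have hsplit : ∑ j ∈ range D, j.choose i * laguerreIncrement j y
      = D.choose i * (laguerreNeg D y - laguerreIncrement D y - laguerreMaxMean D y i) := by
    rw [← sum_laguerreIncrement, sum_range_succ, add_sub_cancel_right, laguerreMaxMean,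
      ← sum_sub_distrib, mul_sum]
    exact sum_congr rfl fun j _ => by field_simp; ring
  have htelescope := mul_sum_choose_sub_mul_laguerreIncrement D i y
  rw [hsplit] at htelescope
  refine mul_right_cancel₀ hpos.ne' ?_
  linear_combination y * hsucc + (i + 1) * htelescope

/-- The optimal dual solution of the linear program that bounds the expected number of edges in a
random matching: the multiplier attached to a vertex `u` that has `t` free neighbours. -/
noncomputable def dualMultiplier (D : ℕ) (x : ℝ) (t : ℕ) : ℝ :=
  laguerreMaxMean D x⁻¹ t / t + x * laguerreNeg D x⁻¹

lemma mul_dualMultiplier (D : ℕ) (x : ℝ) (t : ℕ) :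
    t * dualMultiplier D x t = laguerreMaxMean D x⁻¹ t + x * t * laguerreNeg D x⁻¹ := by
  rcases t.eq_zero_or_pos with rfl | ht
  · simp [laguerreMaxMean_zero]
  · rw [dualMultiplier]
    field_simp

/-- Equality of the dual constraint for local configurations of `K_{D+1,D+1}`, where both ends of
an edge see the same number `i` of other free neighbours and no common one. -/
lemma sub_mul_dualMultiplier_succ {D i : ℕ} (hi : i ≤ D) {x : ℝ} (hx : x ≠ 0) :
    (D - i) * dualMultiplier D x (i + 1)
      = (D + 1) * x * laguerreNeg (D + 1) x⁻¹
        - laguerreNeg D x⁻¹ * (1 + (2 * i + 1) * x + i ^ 2 * x ^ 2)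
        + x * i * (i * dualMultiplier D x i) := by
  have hmean := laguerreMaxMean_succ hi x⁻¹
  have hincr := succ_mul_laguerreIncrement_succ D x⁻¹
  rw [mul_dualMultiplier, laguerreNeg_succ, dualMultiplier]
  push_cast
  field_simp at hmean hincr ⊢
  linear_combination hmean - (i + 1) * hincr

lemma local_dual_inequality {D i j k : ℕ} {x : ℝ} (hx : 0 < x) (hi : i ≤ D) (hj : j ≤ D)
    (hki : k ≤ i) (hkj : k ≤ j) :
    (D + 1) * x * laguerreNeg (D + 1) x⁻¹
      ≤ laguerreNeg D x⁻¹ * (1 + (i + j + 1) * x + (i * j - k) * x ^ 2)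
        + ((D - i) * dualMultiplier D x (i + 1)
          - x * ((j - k) * (i * dualMultiplier D x i)
            + k * ((i - 1 : ℕ) * dualMultiplier D x (i - 1)))
          + ((D - j) * dualMultiplier D x (j + 1)
          - x * ((i - k) * (j * dualMultiplier D x j)
            + k * ((j - 1 : ℕ) * dualMultiplier D x (j - 1))))) / 2 := by
  have hmono {a b : ℕ} (hab : a ≤ b) (hb : b ≤ D) :
      laguerreMaxMean D x⁻¹ a ≤ laguerreMaxMean D x⁻¹ b :=
    laguerreMaxMean_le_of_le (inv_nonneg.2 hx.le) hab hb
  have hpredMean {t : ℕ} (ht : t ≤ D) :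
      0 ≤ x * k * (laguerreMaxMean D x⁻¹ t - laguerreMaxMean D x⁻¹ (t - 1)) :=
    mul_nonneg (by positivity) (sub_nonneg.2 (hmono (Nat.sub_le t 1) ht))
  have hrearrange :
      0 ≤ x * ((laguerreMaxMean D x⁻¹ i - laguerreMaxMean D x⁻¹ j) * ((i : ℝ) - j)) := by
    refine mul_nonneg hx.le ?_
    rcases le_total i j with h | h
    · exact mul_nonneg_of_nonpos_of_nonpos (sub_nonpos.2 (hmono h hj))
        (sub_nonpos.2 (Nat.cast_le.2 h))
    · exact mul_nonneg (sub_nonneg.2 (hmono h hi)) (sub_nonneg.2 (Nat.cast_le.2 h))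
  rw [sub_mul_dualMultiplier_succ hi hx.ne', sub_mul_dualMultiplier_succ hj hx.ne']
  simp only [mul_dualMultiplier]
  linear_combination (hrearrange + hpredMean hi + hpredMean hj) / 2
    + x ^ 2 * laguerreNeg D x⁻¹ / 2 * (cast_mul_pred_of_le hki + cast_mul_pred_of_le hkj)

end DualSolution

section LogComparison

lemma mul_log_le_mul_log_of_hasDerivAt {f g f' g' : ℝ → ℝ} {a b x : ℝ}
    (hf : ∀ t, 0 ≤ t → HasDerivAt f (f' t) t) (hg : ∀ t, 0 ≤ t → HasDerivAt g (g' t) t)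
    (hf_pos : ∀ t, 0 ≤ t → 0 < f t) (hg_pos : ∀ t, 0 ≤ t → 0 < g t)
    (hf_zero : f 0 = 1) (hg_zero : g 0 = 1)
    (h : ∀ t, 0 < t → a * f' t * g t ≤ b * g' t * f t) (hx : 0 ≤ x) :
    a * Real.log (f x) ≤ b * Real.log (g x) := by
  have hderiv (t : ℝ) (ht : 0 ≤ t) : HasDerivAt (fun s => b * Real.log (g s) - a * Real.log (f s))
      (b * (g' t / g t) - a * (f' t / f t)) t :=
    (((hg t ht).log (hg_pos t ht).ne').const_mul b).sub
      (((hf t ht).log (hf_pos t ht).ne').const_mul a)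
  have hmono : MonotoneOn (fun s => b * Real.log (g s) - a * Real.log (f s)) (Set.Ici 0) := by
    refine monotoneOn_of_hasDerivWithinAt_nonneg (convex_Ici 0)
      (fun t ht => (hderiv t ht).continuousAt.continuousWithinAt)
      (fun t ht => (hderiv t (interior_subset ht)).hasDerivWithinAt) fun t ht => ?_
    rw [interior_Ici] at ht
    rw [sub_nonneg, mul_div_assoc', mul_div_assoc',
      div_le_div_iff₀ (hf_pos t ht.le) (hg_pos t ht.le)]
    exact h t ht
  have hcompare := hmono Set.self_mem_Ici hx hx
  simp only [hf_zero, hg_zero, Real.log_one, mul_zero, sub_zero] at hcompare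
  exact sub_nonneg.1 hcompare

end LogComparison

section Matchings

variable {V : Type*} [Fintype V] {G : SimpleGraph V} {S : Finset V} {F H : Finset (Sym2 V)}
  {u v : V}

/-- The neighbours of `u` that are not covered by the set of edges `F`. -/
noncomputable def freeNeighbors (G : SimpleGraph V) (F : Finset (Sym2 V)) (u : V) : Finset V :=
  {v ∈ G.neighborFinset u | ∀ e ∈ F, v ∉ e}

lemma mem_freeNeighbors :
    v ∈ freeNeighbors G F u ↔ G.Adj u v ∧ ∀ e ∈ F, v ∉ e := by
  simp [freeNeighbors]

lemma freeNeighbors_subset (G : SimpleGraph V) (F : Finset (Sym2 V)) (u : V) :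
    freeNeighbors G F u ⊆ G.neighborFinset u :=
  filter_subset _ _

lemma card_freeNeighbors_le (G : SimpleGraph V) (F : Finset (Sym2 V)) (u : V) :
    #(freeNeighbors G F u) ≤ G.degree u :=
  card_le_card (freeNeighbors_subset G F u)

variable [DecidableEq V]

/-- The matchings of `G` that cover no vertex of `S`, that is, the matchings of `G - S`. -/
noncomputable def matchingsAvoiding (G : SimpleGraph V) (S : Finset V) :
    Finset (Finset (Sym2 V)) :=
  {M ∈ matchingsFinset G | ∀ e ∈ M, ∀ v ∈ S, v ∉ e}

lemma mem_matchingsAvoiding :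
    H ∈ matchingsAvoiding G S ↔ (∀ e ∈ H, e ∈ G.edgeSet) ∧
      (∀ e ∈ H, ∀ f ∈ H, e ≠ f → ∀ v : V, v ∈ e → v ∉ f) ∧ ∀ e ∈ H, ∀ v ∈ S, v ∉ e := by
  simp [matchingsAvoiding, matchingsFinset, and_assoc]

lemma matchingsAvoiding_empty (G : SimpleGraph V) :
    matchingsAvoiding G ∅ = matchingsFinset G := by
  simp [matchingsAvoiding]

lemma matchingsAvoiding_insert (G : SimpleGraph V) (S : Finset V) (u : V) :
    matchingsAvoiding G (insert u S) = {H ∈ matchingsAvoiding G S | ∀ e ∈ H, u ∉ e} := by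
  ext H
  simp only [mem_filter, mem_matchingsAvoiding, forall_mem_insert]
  grind

lemma notMem_of_mem_matchingsAvoiding (hF : F ∈ matchingsAvoiding G (insert u S)) (v : V) :
    s(u, v) ∉ F := fun h =>
  (mem_matchingsAvoiding.1 hF).2.2 _ h u (mem_insert_self u S) (Sym2.mem_mk_left u v)

lemma insert_mem_matchingsAvoiding (huv : G.Adj u v) (hu : u ∉ S) (hv : v ∉ S)
    (hF : F ∈ matchingsAvoiding G (insert u (insert v S))) :
    insert s(u, v) F ∈ matchingsAvoiding G S := by
  simp only [mem_matchingsAvoiding, forall_mem_insert, Sym2.mem_iff, SimpleGraph.mem_edgeSet]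
    at hF ⊢
  grind

lemma erase_mem_matchingsAvoiding (hH : H ∈ matchingsAvoiding G S) (huv : s(u, v) ∈ H) :
    H.erase s(u, v) ∈ matchingsAvoiding G (insert u (insert v S)) := by
  simp only [mem_matchingsAvoiding, forall_mem_insert, mem_erase] at hH ⊢
  have hu := Sym2.mem_mk_left u v
  have hv := Sym2.mem_mk_right u v
  grind

lemma eq_of_mk_mem_matchingsAvoiding {w : V} (hH : H ∈ matchingsAvoiding G S)
    (hv : s(u, v) ∈ H) (hw : s(u, w) ∈ H) : v = w := by
  by_contra hne
  exact (mem_matchingsAvoiding.1 hH).2.1 _ hv _ hw (mt Sym2.congr_right.1 hne) u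
    (Sym2.mem_mk_left u v) (Sym2.mem_mk_left u w)

lemma sum_matchingsAvoiding_filter_mem {R : Type*} [AddCommMonoid R] (huv : G.Adj u v)
    (hu : u ∉ S) (hv : v ∉ S) (f : Finset (Sym2 V) → R) :
    ∑ H ∈ matchingsAvoiding G S with s(u, v) ∈ H, f H
      = ∑ F ∈ matchingsAvoiding G (insert u (insert v S)), f (insert s(u, v) F) := by
  refine sum_nbij' (fun H => H.erase s(u, v)) (fun F => insert s(u, v) F) ?_ ?_ ?_ ?_ ?_
  · intro H hH
    exact erase_mem_matchingsAvoiding (mem_filter.1 hH).1 (mem_filter.1 hH).2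
  · intro F hF
    exact mem_filter.2 ⟨insert_mem_matchingsAvoiding huv hu hv hF, mem_insert_self _ _⟩
  · intro H hH
    exact insert_erase (mem_filter.1 hH).2
  · intro F hF
    exact erase_insert (notMem_of_mem_matchingsAvoiding hF v)
  · intro H hH
    rw [insert_erase (mem_filter.1 hH).2]

lemma filter_covered_eq_biUnion (G : SimpleGraph V) (S : Finset V) (u : V) :
    {H ∈ matchingsAvoiding G S | ¬ ∀ e ∈ H, u ∉ e}
      = (G.neighborFinset u \ S).biUnion
        fun v => {H ∈ matchingsAvoiding G S | s(u, v) ∈ H} := by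
  ext H
  simp only [mem_filter, mem_biUnion, mem_sdiff, SimpleGraph.mem_neighborFinset]
  constructor
  · rintro ⟨hH, hcov⟩
    push Not at hcov
    obtain ⟨e, he, hue⟩ := hcov
    obtain ⟨v, rfl⟩ := Sym2.mem_iff_exists.1 hue
    obtain ⟨hedge, -, havoid⟩ := mem_matchingsAvoiding.1 hH
    exact ⟨v, ⟨hedge _ he, fun hvS => havoid _ he v hvS (Sym2.mem_mk_right u v)⟩, hH, he⟩
  · rintro ⟨v, -, hH, huv⟩
    exact ⟨hH, fun h => h _ huv (Sym2.mem_mk_left u v)⟩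

lemma mem_freeNeighbors_sdiff_iff :
    F ∈ matchingsAvoiding G (insert u S) ∧ v ∈ freeNeighbors G F u \ S ↔
      F ∈ matchingsAvoiding G (insert u (insert v S)) ∧ v ∈ G.neighborFinset u \ S := by
  rw [insert_comm, matchingsAvoiding_insert G (insert u S) v]
  simp only [mem_filter, mem_sdiff, mem_freeNeighbors, SimpleGraph.mem_neighborFinset]
  tauto

/-- Classify the matchings of `G - S` by the partner of `u`, if any. -/
lemma sum_matchingsAvoiding_eq_sum_insert {R : Type*} [AddCommMonoid R] (hu : u ∉ S)
    (f : Finset (Sym2 V) → R) :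
    ∑ H ∈ matchingsAvoiding G S, f H
      = ∑ F ∈ matchingsAvoiding G (insert u S),
        (f F + ∑ v ∈ freeNeighbors G F u \ S, f (insert s(u, v) F)) := by
  have hdisj : Set.PairwiseDisjoint ↑(G.neighborFinset u \ S)
      fun v => {H ∈ matchingsAvoiding G S | s(u, v) ∈ H} := by
    intro v _ w _ hvw
    refine disjoint_left.2 fun H hHv hHw => hvw ?_
    exact eq_of_mk_mem_matchingsAvoiding (mem_filter.1 hHv).1 (mem_filter.1 hHv).2
      (mem_filter.1 hHw).2
  have hpartner : ∀ v ∈ G.neighborFinset u \ S,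
      ∑ H ∈ matchingsAvoiding G S with s(u, v) ∈ H, f H
        = ∑ F ∈ matchingsAvoiding G (insert u (insert v S)), f (insert s(u, v) F) := by
    intro v hv
    rw [mem_sdiff, SimpleGraph.mem_neighborFinset] at hv
    exact sum_matchingsAvoiding_filter_mem hv.1 hu hv.2 f
  rw [← sum_filter_add_sum_filter_not _ fun H => ∀ e ∈ H, u ∉ e, ← matchingsAvoiding_insert,
    filter_covered_eq_biUnion, sum_biUnion hdisj, sum_congr rfl hpartner, sum_add_distrib]
  congr 1
  exact sum_comm' fun _ _ => and_comm.trans (mem_freeNeighbors_sdiff_iff.symm.trans and_comm)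

/-- The free neighbours of `u` other than `v`. -/
noncomputable def otherFreeNeighbors (G : SimpleGraph V) (F : Finset (Sym2 V)) (u v : V) :
    Finset V :=
  (freeNeighbors G F u).erase v

lemma mem_freeNeighbors_of_mem_matchingsAvoiding (huv : G.Adj u v)
    (hF : F ∈ matchingsAvoiding G {u, v}) : v ∈ freeNeighbors G F u :=
  mem_freeNeighbors.2 ⟨huv, fun e he => (mem_matchingsAvoiding.1 hF).2.2 e he v (by simp)⟩

lemma card_freeNeighbors_eq (huv : G.Adj u v) (hF : F ∈ matchingsAvoiding G {u, v}) :
    #(freeNeighbors G F u) = #(otherFreeNeighbors G F u v) + 1 :=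
  (card_erase_add_one (mem_freeNeighbors_of_mem_matchingsAvoiding huv hF)).symm

lemma freeNeighbors_insert (G : SimpleGraph V) (F : Finset (Sym2 V)) (u v w : V) :
    freeNeighbors G (insert s(v, w) F) u = (otherFreeNeighbors G F u v).erase w := by
  ext a
  simp only [otherFreeNeighbors, mem_erase, mem_freeNeighbors, forall_mem_insert, Sym2.mem_iff]
  tauto

/-- Matching `v` to `b` removes from the free neighbours of `u` first `v`, and then `b` if it is one
of them. -/
lemma sum_ite_mem_freeNeighbors (huv : G.Adj u v) (φ₁ φ₀ : ℕ → ℝ) (x : ℝ) :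
    ∑ F ∈ matchingsAvoiding G {u}, x ^ #F * (if v ∈ freeNeighbors G F u
        then φ₁ #(freeNeighbors G F u) else φ₀ #(freeNeighbors G F u))
      = ∑ F ∈ matchingsAvoiding G {u, v}, x ^ #F * (φ₁ (#(otherFreeNeighbors G F u v) + 1)
        + x * ((#(otherFreeNeighbors G F v u)
            - #(otherFreeNeighbors G F u v ∩ otherFreeNeighbors G F v u))
              * φ₀ #(otherFreeNeighbors G F u v)
          + #(otherFreeNeighbors G F u v ∩ otherFreeNeighbors G F v u)
              * φ₀ (#(otherFreeNeighbors G F u v) - 1))) := by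
  rw [sum_matchingsAvoiding_eq_sum_insert (notMem_singleton.2 huv.ne'), pair_comm v u]
  refine sum_congr rfl fun F hF => ?_
  have hmatched : ∀ b ∈ freeNeighbors G F v \ {u}, v ∉ freeNeighbors G (insert s(v, b) F) u :=
    fun b _ h => (mem_freeNeighbors.1 h).2 _ (mem_insert_self _ _) (Sym2.mem_mk_left v b)
  have hcard (b : V) : #(insert s(v, b) F) = #F + 1 :=
    card_insert_of_notMem (notMem_of_mem_matchingsAvoiding (S := {u}) (pair_comm u v ▸ hF) b)
  have hother : otherFreeNeighbors G F v u = freeNeighbors G F v \ {u} :=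
    (sdiff_singleton_eq_erase u _).symm
  rw [if_pos (mem_freeNeighbors_of_mem_matchingsAvoiding huv hF), card_freeNeighbors_eq huv hF,
    ← sum_card_erase, mul_add, mul_sum, mul_sum, hother]
  congr 1
  refine sum_congr rfl fun b hb => ?_
  rw [if_neg (hmatched b hb), hcard, freeNeighbors_insert, pow_succ, mul_assoc]

lemma matchingPoly_eq_sum_vertex (G : SimpleGraph V) (u : V) (x : ℝ) :
    matchingPoly G x
      = ∑ F ∈ matchingsAvoiding G {u}, x ^ #F * (1 + x * #(freeNeighbors G F u)) := by
  rw [matchingPoly, ← matchingsAvoiding_empty, sum_matchingsAvoiding_eq_sum_insert (notMem_empty u),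
    insert_empty_eq]
  refine sum_congr rfl fun F hF => ?_
  have hpow : ∀ v ∈ freeNeighbors G F u, x ^ #(insert s(u, v) F) = x ^ #F * x := fun v _ => by
    rw [card_insert_of_notMem (notMem_of_mem_matchingsAvoiding (S := ∅) hF v), pow_succ]
  rw [sdiff_empty, sum_congr rfl hpow, sum_const, nsmul_eq_mul]
  ring

lemma matchingPoly_eq_sum_edge (huv : G.Adj u v) (x : ℝ) :
    matchingPoly G x = ∑ F ∈ matchingsAvoiding G {u, v}, x ^ #F *
      (1 + (#(otherFreeNeighbors G F u v) + #(otherFreeNeighbors G F v u) + 1) * x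
        + (#(otherFreeNeighbors G F u v) * #(otherFreeNeighbors G F v u)
          - #(otherFreeNeighbors G F u v ∩ otherFreeNeighbors G F v u)) * x ^ 2) := by
  have hexpose := sum_ite_mem_freeNeighbors huv (fun t => 1 + x * t) (fun t => 1 + x * t) x
  simp only [ite_self] at hexpose
  rw [matchingPoly_eq_sum_vertex G u, hexpose]
  refine sum_congr rfl fun F _ => ?_
  push_cast
  linear_combination x ^ #F * x ^ 2 * cast_mul_pred_of_le (card_le_card
    (inter_subset_left (s₁ := otherFreeNeighbors G F u v) (s₂ := otherFreeNeighbors G F v u)))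

/-- The matching polynomial of `G - S`. -/
noncomputable def matchingPolyAvoiding (G : SimpleGraph V) (S : Finset V) (x : ℝ) : ℝ :=
  ∑ F ∈ matchingsAvoiding G S, x ^ #F

/-- The Lagrangian term of the directed edge `(u, v)`: over the matchings of `G - u`, compare the
event that `v` is free with the fraction of neighbours of `u` that are free, with a weight `p`
depending on their number. -/
noncomputable def freenessDefect (G : SimpleGraph V) (p : ℕ → ℝ) (x : ℝ) (u v : V) : ℝ :=
  ∑ F ∈ matchingsAvoiding G {u}, x ^ #F * (p #(freeNeighbors G F u) *
    ((if v ∈ freeNeighbors G F u then (G.degree u : ℝ) else 0) - #(freeNeighbors G F u)))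

lemma sum_freenessDefect (G : SimpleGraph V) (p : ℕ → ℝ) (x : ℝ) (u : V) :
    ∑ v ∈ G.neighborFinset u, freenessDefect G p x u v = 0 := by
  simp only [freenessDefect]
  rw [sum_comm]
  refine sum_eq_zero fun F _ => ?_
  have hfree : #{v ∈ G.neighborFinset u | v ∈ freeNeighbors G F u} = #(freeNeighbors G F u) := by
    rw [filter_mem_eq_inter, inter_eq_right.2 (freeNeighbors_subset G F u)]
  rw [← mul_sum, ← mul_sum, sum_sub_distrib, ← sum_filter, sum_const, sum_const, hfree,
    SimpleGraph.card_neighborFinset_eq_degree]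
  simp only [nsmul_eq_mul]
  ring

lemma freenessDefect_eq_sum_edge (huv : G.Adj u v) (p : ℕ → ℝ) (x : ℝ) :
    freenessDefect G p x u v = ∑ F ∈ matchingsAvoiding G {u, v}, x ^ #F *
      ((G.degree u - 1 - #(otherFreeNeighbors G F u v)) * p (#(otherFreeNeighbors G F u v) + 1)
        - x * ((#(otherFreeNeighbors G F v u)
            - #(otherFreeNeighbors G F u v ∩ otherFreeNeighbors G F v u))
              * (#(otherFreeNeighbors G F u v) * p #(otherFreeNeighbors G F u v))
          + #(otherFreeNeighbors G F u v ∩ otherFreeNeighbors G F v u)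
              * ((#(otherFreeNeighbors G F u v) - 1 : ℕ)
                * p (#(otherFreeNeighbors G F u v) - 1)))) := by
  have hexpose := sum_ite_mem_freeNeighbors huv (fun t => p t * (G.degree u - t))
    (fun t => p t * (0 - t)) x
  rw [freenessDefect]
  refine Eq.trans (sum_congr rfl fun F _ => ?_) (hexpose.trans (sum_congr rfl fun F _ => ?_))
  · split_ifs <;> rfl
  · push_cast
    ring

lemma sum_card_filter_mk_mem {M : Finset (Sym2 V)} (hM : ∀ e ∈ M, e ∈ G.edgeSet) :
    ∑ u, #{v ∈ G.neighborFinset u | s(u, v) ∈ M} = 2 * #M := by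
  have hnbr (u : V) : {v ∈ G.neighborFinset u | s(u, v) ∈ M}
      = (SimpleGraph.fromEdgeSet (M : Set (Sym2 V))).neighborFinset u := by
    ext v
    have hadj : s(u, v) ∈ M → G.Adj u v := hM s(u, v)
    simp only [mem_filter, SimpleGraph.mem_neighborFinset, SimpleGraph.fromEdgeSet_adj, mem_coe]
    exact ⟨fun h => ⟨h.2, h.1.ne⟩, fun h => ⟨hadj h.1, h.1⟩⟩
  simp_rw [hnbr, SimpleGraph.card_neighborFinset_eq_degree]
  rw [SimpleGraph.sum_degrees_eq_twice_card_edges]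
  congr 2
  ext e
  have hdiag : e ∈ M → ¬ e.IsDiag := fun he => G.not_isDiag_of_mem_edgeSet (hM e he)
  simpa using hdiag

lemma matchingPolyAvoiding_pair_eq_sum (huv : G.Adj u v) (x : ℝ) :
    matchingPolyAvoiding G {u, v} x
      = ∑ M ∈ matchingsFinset G, if s(u, v) ∈ M then x ^ (#M - 1) else 0 := by
  rw [← sum_filter, ← matchingsAvoiding_empty,
    sum_matchingsAvoiding_filter_mem huv (notMem_empty u) (notMem_empty v), insert_empty_eq]
  refine sum_congr rfl fun F hF => ?_
  rw [card_insert_of_notMem (notMem_of_mem_matchingsAvoiding hF v), Nat.add_sub_cancel]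

lemma hasDerivAt_matchingPoly (G : SimpleGraph V) (x : ℝ) :
    HasDerivAt (matchingPoly G)
      ((∑ u, ∑ v ∈ G.neighborFinset u, matchingPolyAvoiding G {u, v} x) / 2) x := by
  have hterms : HasDerivAt (matchingPoly G)
      (∑ M ∈ matchingsFinset G, (#M : ℝ) * x ^ (#M - 1)) x :=
    HasDerivAt.fun_sum fun M _ => hasDerivAt_pow #M x
  have hcount : ∀ M ∈ matchingsFinset G,
      ∑ u, ∑ v ∈ G.neighborFinset u, (if s(u, v) ∈ M then x ^ (#M - 1) else 0)
        = 2 * (#M * x ^ (#M - 1)) := by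
    intro M hM
    have hdarts := sum_card_filter_mk_mem (mem_filter.1 hM).2.1
    simp only [← sum_filter, sum_const, nsmul_eq_mul, ← sum_mul]
    rw [← mul_assoc]
    congr 1
    exact_mod_cast hdarts
  convert hterms using 1
  rw [div_eq_iff two_ne_zero, sum_mul]
  calc ∑ u, ∑ v ∈ G.neighborFinset u, matchingPolyAvoiding G {u, v} x
      = ∑ u, ∑ v ∈ G.neighborFinset u,
          ∑ M ∈ matchingsFinset G, if s(u, v) ∈ M then x ^ (#M - 1) else 0 :=
        sum_congr rfl fun u _ => sum_congr rfl fun v hv =>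
          matchingPolyAvoiding_pair_eq_sum ((G.mem_neighborFinset u v).1 hv) x
    _ = ∑ M ∈ matchingsFinset G,
          ∑ u, ∑ v ∈ G.neighborFinset u, if s(u, v) ∈ M then x ^ (#M - 1) else 0 := by
        rw [sum_comm]
        exact sum_congr rfl fun u _ => sum_comm
    _ = ∑ M ∈ matchingsFinset G, #M * x ^ (#M - 1) * 2 :=
        sum_congr rfl fun M hM => by rw [hcount M hM, mul_comm]

lemma matchingPoly_zero (G : SimpleGraph V) : matchingPoly G 0 = 1 := by
  simp [matchingPoly, matchingsFinset, zero_pow_eq]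

lemma matchingPoly_pos (G : SimpleGraph V) {x : ℝ} (hx : 0 ≤ x) : 0 < matchingPoly G x := by
  have hempty : ∅ ∈ matchingsFinset G := by simp [matchingsFinset]
  exact sum_pos' (fun M _ => by positivity) ⟨∅, hempty, by simp⟩

lemma card_otherFreeNeighbors_le {D : ℕ} (hreg : G.IsRegularOfDegree (D + 1)) (huv : G.Adj u v)
    (hF : F ∈ matchingsAvoiding G {u, v}) : #(otherFreeNeighbors G F u v) ≤ D := by
  have hle := card_freeNeighbors_le G F u
  rwa [card_freeNeighbors_eq huv hF, hreg.degree_eq, Nat.add_le_add_iff_right] at hle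

lemma mul_matchingPolyAvoiding_pair_le {D : ℕ} (hreg : G.IsRegularOfDegree (D + 1))
    (huv : G.Adj u v) {x : ℝ} (hx : 0 < x) :
    (D + 1) * x * laguerreNeg (D + 1) x⁻¹ * matchingPolyAvoiding G {u, v} x
      ≤ laguerreNeg D x⁻¹ * matchingPoly G x
        + (freenessDefect G (dualMultiplier D x) x u v
          + freenessDefect G (dualMultiplier D x) x v u) / 2 := by
  rw [matchingPoly_eq_sum_edge huv, freenessDefect_eq_sum_edge huv,
    freenessDefect_eq_sum_edge huv.symm, pair_comm v u, matchingPolyAvoiding, hreg.degree_eq,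
    hreg.degree_eq, mul_sum, mul_sum, ← sum_add_distrib, sum_div, ← sum_add_distrib]
  refine sum_le_sum fun F hF => ?_
  have hlocal := local_dual_inequality hx (card_otherFreeNeighbors_le hreg huv hF)
    (card_otherFreeNeighbors_le hreg huv.symm (pair_comm u v ▸ hF))
    (card_le_card inter_subset_left) (card_le_card inter_subset_right)
  rw [inter_comm (otherFreeNeighbors G F v u)]
  push_cast
  linear_combination x ^ #F * hlocal

lemma sum_matchingPolyAvoiding_pair_le {D : ℕ} (hreg : G.IsRegularOfDegree (D + 1)) {x : ℝ}
    (hx : 0 < x) :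
    bicliqueMatchingPoly (D + 1) x
        * ∑ u, ∑ v ∈ G.neighborFinset u, matchingPolyAvoiding G {u, v} x
      ≤ Fintype.card V * ((D + 1) * bicliqueMatchingPoly D x) * matchingPoly G x := by
  have hdefect : ∑ u, ∑ v ∈ G.neighborFinset u, freenessDefect G (dualMultiplier D x) x u v = 0 :=
    sum_eq_zero fun u _ => sum_freenessDefect G _ x u
  have hdefect_symm :
      ∑ u, ∑ v ∈ G.neighborFinset u, freenessDefect G (dualMultiplier D x) x v u = 0 := by
    rw [← hdefect]
    exact sum_comm' fun u v => by simp [G.adj_comm]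
  have hdarts : (D + 1) * x * laguerreNeg (D + 1) x⁻¹
        * ∑ u, ∑ v ∈ G.neighborFinset u, matchingPolyAvoiding G {u, v} x
      ≤ Fintype.card V * ((D + 1) * (laguerreNeg D x⁻¹ * matchingPoly G x)) :=
    calc _ ≤ ∑ u, ∑ v ∈ G.neighborFinset u, (laguerreNeg D x⁻¹ * matchingPoly G x
          + (freenessDefect G (dualMultiplier D x) x u v
            + freenessDefect G (dualMultiplier D x) x v u) / 2) := by
          simp only [mul_sum]
          exact sum_le_sum fun u _ => sum_le_sum fun v hv =>
            mul_matchingPolyAvoiding_pair_le hreg ((G.mem_neighborFinset u v).1 hv) hx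
      _ = _ := by
          simp only [sum_add_distrib, ← sum_div, hdefect, hdefect_symm, sum_const,
            SimpleGraph.card_neighborFinset_eq_degree, hreg.degree_eq, card_univ, nsmul_eq_mul]
          push_cast
          ring
  rw [bicliqueMatchingPoly_eq_laguerreNeg _ hx.ne', bicliqueMatchingPoly_eq_laguerreNeg _ hx.ne',
    Nat.factorial_succ]
  push_cast
  linear_combination D.factorial * x ^ D * hdarts

lemma two_mul_degree_mul_log_matchingPoly_le {D : ℕ}
    (hreg : G.IsRegularOfDegree (D + 1)) {x : ℝ} (hx : 0 ≤ x) :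
    2 * (D + 1) * Real.log (matchingPoly G x)
      ≤ Fintype.card V * Real.log (bicliqueMatchingPoly (D + 1) x) := by
  refine mul_log_le_mul_log_of_hasDerivAt (fun t _ => hasDerivAt_matchingPoly G t)
    (fun t _ => hasDerivAt_bicliqueMatchingPoly D t) (fun t ht => matchingPoly_pos G ht)
    (fun t ht => zero_lt_one.trans_le (one_le_bicliqueMatchingPoly _ ht)) (matchingPoly_zero G)
    (bicliqueMatchingPoly_zero _) (fun t ht => ?_) hx
  linear_combination (D + 1) * sum_matchingPolyAvoiding_pair_le hreg ht

end Matchings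

/-- For every $d$-regular graph $G$ and $\lambda > 0$, the normalized (per edge)
log matching polynomial of $G$ is at most that of $K_{d,d}$, which has $d^2$ edges
and matching polynomial $\sum_{k=0}^d \binom dk^2 k! \lambda^k$. -/
theorem normalized_log_matchingPoly_le {V : Type*} [Fintype V] [DecidableEq V]
    (G : SimpleGraph V) (d : ℕ) (hd : 1 ≤ d) (hreg : G.IsRegularOfDegree d)
    (x : ℝ) (hx : 0 < x) :
    (1 / (G.edgeFinset.card : ℝ)) * Real.log (matchingPoly G x)
      ≤ (1 / (d ^ 2 : ℝ)) *
        Real.log (∑ k ∈ Finset.range (d + 1),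
          ((d.choose k) ^ 2 * k.factorial : ℝ) * x ^ k) := by
  obtain ⟨D, rfl⟩ := Nat.exists_eq_add_of_le' hd
  change _ ≤ _ * Real.log (bicliqueMatchingPoly (D + 1) x)
  have hlog := two_mul_degree_mul_log_matchingPoly_le hreg hx.le
  have hhandshake : (Fintype.card V : ℝ) * (D + 1) = 2 * #G.edgeFinset := by
    have hsum := G.sum_degrees_eq_twice_card_edges
    simp only [hreg.degree_eq, sum_const, smul_eq_mul, card_univ] at hsum
    exact_mod_cast hsum
  rcases (#G.edgeFinset).eq_zero_or_pos with hempty | hedges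
  · have hnonneg := Real.log_nonneg (one_le_bicliqueMatchingPoly (D + 1) hx.le)
    rw [hempty, Nat.cast_zero, div_zero, zero_mul]
    positivity
  · rw [one_div_mul_eq_div, one_div_mul_eq_div, div_le_div_iff₀ (mod_cast hedges) (by positivity)]
    push_cast
    linear_combination (D + 1) / 2 * hlog
      + Real.log (bicliqueMatchingPoly (D + 1) x) / 2 * hhandshake
end

section
/- The total number of matchings of any d-regular graph G on n vertices (with 2d | n) is at most (Σ_{k=0}^{d} (d choose k)² k!)^{n/(2d)}, the number of matchings of a disjoint union of n/(2d) copies of K_{d,d}. -/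
open Finset
open scoped Classical

/-! Weigh each matching `M` of the `d`-regular graph `G` by `t ^ #M`, and let `q` be the number of
uncovered neighbours of an uncovered vertex `u`. Sum `f(q)` over all pairs of a covered vertex `v`
and an uncovered neighbour `u` of `v`, and remove from `M` the edge that covers `v`: for antitone
`f` this gives
`∑ M, t ^ #M * ∑ u, ((d - q) * f(q) - t * q * (q - 1) * f(q - 1)) ≥ 0`,
with equality when `G` is a disjoint union of copies of `K_{d,d}`. One antitone `f` makes the inner
summand affine in `q`, and the inequality then bounds the mean size of a random matching of `G` by
the corresponding mean for `K_{d,d}`, scaled to the same number of vertices. Up to a factor `t`,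
the mean size is the logarithmic derivative of the matching polynomial, so integrating from `0` to
`1` proves the theorem. -/

theorem sum_sum_erase {ι α : Type*} [DecidableEq ι] [AddCommMonoid α] (s : Finset ι)
    (a : ι → α) :
    ∑ x ∈ s, ∑ u ∈ s.erase x, a u = ∑ u ∈ s, (#s - 1) • a u := by
  rw [sum_comm' (t' := s) (s' := fun u => s.erase u) (by grind)]
  exact sum_congr rfl fun u hu => by rw [sum_const, card_erase_of_mem hu]

theorem pow_le_pow_of_mul_deriv_le {p k p' k' : ℝ → ℝ} {a b : ℕ} {x₀ : ℝ}
    (hp : ∀ x, x₀ ≤ x → 0 < p x) (hk : ∀ x, x₀ ≤ x → 0 < k x) (hbase : p x₀ ^ a ≤ k x₀ ^ b)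
    (hp' : ∀ x, x₀ ≤ x → HasDerivAt p (p' x) x) (hk' : ∀ x, x₀ ≤ x → HasDerivAt k (k' x) x)
    (hle : ∀ x, x₀ < x → a * (p' x * k x) ≤ b * (k' x * p x)) {x : ℝ} (hx : x₀ ≤ x) :
    p x ^ a ≤ k x ^ b := by
  have hderiv (y : ℝ) (hy : x₀ ≤ y) :
      HasDerivAt (fun y => b * Real.log (k y) - a * Real.log (p y))
        (b * (k' y / k y) - a * (p' y / p y)) y :=
    (((hk' y hy).log (hk y hy).ne').const_mul _).sub (((hp' y hy).log (hp y hy).ne').const_mul _)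
  have hmono : MonotoneOn (fun y => b * Real.log (k y) - a * Real.log (p y)) (Set.Ici x₀) := by
    refine monotoneOn_of_hasDerivWithinAt_nonneg (convex_Ici x₀)
      (fun y hy => (hderiv y hy).continuousAt.continuousWithinAt)
      (fun y hy => (hderiv y (interior_subset hy)).hasDerivWithinAt) fun y hy => ?_
    rw [interior_Ici, Set.mem_Ioi] at hy
    rw [sub_nonneg, mul_div_assoc', mul_div_assoc', div_le_div_iff₀ (hp y hy.le) (hk y hy.le),
      mul_assoc, mul_assoc]
    exact hle y hy
  have hlog := hmono Set.self_mem_Ici hx hx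
  have hlog_base := Real.log_le_log (pow_pos (hp x₀ le_rfl) a) hbase
  rw [Real.log_pow, Real.log_pow] at hlog_base
  rw [← Real.log_le_log_iff (pow_pos (hp x hx) a) (pow_pos (hk x hx) b), Real.log_pow, Real.log_pow]
  beta_reduce at hlog
  linarith

section Neighbors

variable {V : Type*} [Fintype V] (H : SimpleGraph V)

theorem sum_neighborFinset_comm {α : Type*} [AddCommMonoid α] (F : V → V → α) :
    ∑ u, ∑ v ∈ H.neighborFinset u, F u v = ∑ u, ∑ v ∈ H.neighborFinset u, F v u :=
  Finset.sum_comm' (by simp [H.adj_comm])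

theorem sum_neighborFinset_mul_le_of_antivary {R : Type*} [CommRing R] [LinearOrder R]
    [IsStrictOrderedRing R] {a b : V → R} (hab : Antivary a b) :
    ∑ u, ∑ _v ∈ H.neighborFinset u, a u * b u ≤
      ∑ u, ∑ v ∈ H.neighborFinset u, a v * b u := by
  have hsum : ∑ u, ∑ v ∈ H.neighborFinset u, (a u * b u + a v * b v) ≤
      ∑ u, ∑ v ∈ H.neighborFinset u, (a u * b v + a v * b u) :=
    sum_le_sum fun u _ => sum_le_sum fun v _ => hab.mul_add_mul_le_mul_add_mul u v
  simp only [sum_add_distrib] at hsum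
  rw [sum_neighborFinset_comm H fun _ v => a v * b v,
    sum_neighborFinset_comm H fun u v => a u * b v] at hsum
  linarith

end Neighbors

section Uncovered

variable {V : Type*} [Fintype V]

/-- The vertices left uncovered by a set of edges `M`. -/
noncomputable def uncovered (M : Finset (Sym2 V)) : Finset V := {v | ∀ e ∈ M, v ∉ e}

/-- The graph that `G` induces on the vertices left uncovered by `M`. It is kept on the vertex
type of `G`, the covered vertices being isolated. -/
def uncoveredGraph (G : SimpleGraph V) (M : Finset (Sym2 V)) : SimpleGraph V where
  Adj u v := G.Adj u v ∧ u ∈ uncovered M ∧ v ∈ uncovered M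
  symm := ⟨fun _ _ h => ⟨h.1.symm, h.2.2, h.2.1⟩⟩
  loopless := ⟨fun _ h => h.1.ne rfl⟩

variable {G : SimpleGraph V} {M : Finset (Sym2 V)} {u v x y : V}

@[simp]
theorem mem_uncovered : v ∈ uncovered M ↔ ∀ e ∈ M, v ∉ e := by
  simp [uncovered]

theorem uncoveredGraph_adj :
    (uncoveredGraph G M).Adj u v ↔ G.Adj u v ∧ u ∈ uncovered M ∧ v ∈ uncovered M :=
  Iff.rfl

theorem mk_notMem_of_mem_uncovered (hx : x ∈ uncovered M) : s(x, y) ∉ M :=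
  fun h => mem_uncovered.1 hx _ h (Sym2.mem_mk_left x y)

theorem mem_uncovered_insert [DecidableEq V] :
    v ∈ uncovered (insert s(x, y) M) ↔ v ∈ uncovered M ∧ v ≠ x ∧ v ≠ y := by
  simp only [mem_uncovered, forall_mem_insert, Sym2.mem_iff, not_or]
  tauto

theorem degree_uncoveredGraph_of_notMem (hu : u ∉ uncovered M) :
    (uncoveredGraph G M).degree u = 0 := by
  simp [← SimpleGraph.card_neighborFinset_eq_degree, Finset.eq_empty_iff_forall_notMem,
    uncoveredGraph_adj, hu]

theorem degree_uncoveredGraph_le : (uncoveredGraph G M).degree u ≤ G.degree u :=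
  SimpleGraph.degree_le_of_le fun _ _ h => h.1

theorem degree_uncoveredGraph_insert_lt [DecidableEq V] (huv : (uncoveredGraph G M).Adj u v) :
    (uncoveredGraph G (insert s(v, x) M)).degree u < (uncoveredGraph G M).degree u := by
  refine card_lt_card ⟨fun w => ?_, fun hsub => ?_⟩
  · simp only [SimpleGraph.mem_neighborFinset, uncoveredGraph_adj, mem_uncovered_insert]
    tauto
  · have hv := hsub ((SimpleGraph.mem_neighborFinset ..).2 huv)
    simp [uncoveredGraph_adj] at hv

theorem card_neighborFinset_sdiff_uncovered [DecidableEq V] (hu : u ∈ uncovered M) :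
    #(G.neighborFinset u \ uncovered M) + (uncoveredGraph G M).degree u = G.degree u := by
  have hres : (uncoveredGraph G M).neighborFinset u = G.neighborFinset u ∩ uncovered M := by
    ext w
    simp only [SimpleGraph.mem_neighborFinset, uncoveredGraph_adj, mem_inter]
    tauto
  rw [← SimpleGraph.card_neighborFinset_eq_degree, hres, card_sdiff_add_card_inter,
    SimpleGraph.card_neighborFinset_eq_degree]

theorem uncovered_insert_inter_neighborFinset [DecidableEq V] (hvx : (uncoveredGraph G M).Adj v x) :
    uncovered (insert s(v, x) M) ∩ G.neighborFinset v =
      ((uncoveredGraph G M).neighborFinset v).erase x := by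
  ext u
  have hne : G.Adj v u → u ≠ v := fun h => h.ne'
  simp only [mem_inter, mem_uncovered_insert, SimpleGraph.mem_neighborFinset, mem_erase,
    uncoveredGraph_adj]
  have := hvx.2.1
  tauto

end Uncovered

section Switching

variable {V : Type*} [Fintype V] [DecidableEq V] {G : SimpleGraph V} {M : Finset (Sym2 V)}
  {x y : V}

theorem mem_matchingsFinset : M ∈ matchingsFinset G ↔
    (∀ e ∈ M, e ∈ G.edgeSet) ∧ ∀ e ∈ M, ∀ f ∈ M, e ≠ f → ∀ v : V, v ∈ e → v ∉ f := by
  simp [matchingsFinset]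

theorem empty_mem_matchingsFinset : ∅ ∈ matchingsFinset G := by
  simp [mem_matchingsFinset]

theorem card_uncovered_add_two_mul_card (hM : M ∈ matchingsFinset G) :
    #(uncovered M) + 2 * #M = Fintype.card V := by
  rw [mem_matchingsFinset] at hM
  have hcovered : (uncovered M)ᶜ = M.biUnion Sym2.toFinset := by
    ext v
    simp
  have hdisj : (M : Set (Sym2 V)).PairwiseDisjoint Sym2.toFinset := fun e he f hf hef =>
    disjoint_left.2 fun v hve hvf =>
      hM.2 e he f hf hef v (Sym2.mem_toFinset.1 hve) (Sym2.mem_toFinset.1 hvf)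
  rw [← card_add_card_compl (uncovered M), hcovered, card_biUnion hdisj,
    sum_congr rfl fun e he => Sym2.card_toFinset_of_not_isDiag e
      (G.not_isDiag_of_mem_edgeSet (hM.1 e he)), sum_const, smul_eq_mul, mul_comm]

theorem insert_mem_matchingsFinset (hM : M ∈ matchingsFinset G)
    (hxy : (uncoveredGraph G M).Adj x y) :
    insert s(x, y) M ∈ matchingsFinset G := by
  rw [mem_matchingsFinset] at hM ⊢
  have hdisj : ∀ e ∈ M, ∀ v ∈ e, v ∉ s(x, y) := by
    intro e he v hve hv
    rcases Sym2.mem_iff.1 hv with rfl | rfl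
    · exact mem_uncovered.1 hxy.2.1 e he hve
    · exact mem_uncovered.1 hxy.2.2 e he hve
  refine ⟨forall_mem_insert _ _ _ |>.2 ⟨hxy.1, hM.1⟩, fun e he f hf hef v hve hvf => ?_⟩
  rcases mem_insert.1 he with rfl | he <;> rcases mem_insert.1 hf with rfl | hf
  · exact hef rfl
  · exact hdisj f hf v hvf hve
  · exact hdisj e he v hve hvf
  · exact hM.2 e he f hf hef v hve hvf

theorem erase_mem_matchingsFinset (hM : M ∈ matchingsFinset G) (e : Sym2 V) :
    M.erase e ∈ matchingsFinset G := by
  rw [mem_matchingsFinset] at hM ⊢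
  exact ⟨fun f hf => hM.1 f (mem_of_mem_erase hf), fun f hf g hg =>
    hM.2 f (mem_of_mem_erase hf) g (mem_of_mem_erase hg)⟩

theorem uncoveredGraph_erase_adj (hM : M ∈ matchingsFinset G) (hxy : s(x, y) ∈ M) :
    (uncoveredGraph G (M.erase s(x, y))).Adj x y := by
  rw [mem_matchingsFinset] at hM
  have hfree : ∀ v ∈ s(x, y), v ∈ uncovered (M.erase s(x, y)) := fun v hv =>
    mem_uncovered.2 fun e he =>
      hM.2 _ hxy e (mem_of_mem_erase he) (ne_of_mem_erase he).symm v hv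
  exact ⟨hM.1 _ hxy, hfree x (Sym2.mem_mk_left x y), hfree y (Sym2.mem_mk_right x y)⟩

variable (G) in
theorem sum_filter_notMem_uncovered {α : Type*} [AddCommMonoid α] (v : V)
    (h : Finset (Sym2 V) → α) :
    ∑ M ∈ matchingsFinset G with v ∉ uncovered M, h M =
      ∑ M ∈ matchingsFinset G, ∑ x ∈ (uncoveredGraph G M).neighborFinset v,
        h (insert s(v, x) M) := by
  rw [sum_sigma']
  symm
  refine sum_bij (fun p _ => insert s(v, p.2) p.1) ?_ ?_ ?_ fun _ _ => rfl
  · rintro ⟨M, x⟩ hp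
    simp only [mem_sigma, SimpleGraph.mem_neighborFinset] at hp
    simp [insert_mem_matchingsFinset hp.1 hp.2]
  · rintro ⟨M, x⟩ hp ⟨N, y⟩ hq heq
    simp only [mem_sigma, SimpleGraph.mem_neighborFinset] at hp hq
    have hvM := mk_notMem_of_mem_uncovered (y := y) hp.2.2.1
    obtain rfl : y = x := by
      have : s(v, y) ∈ insert s(v, x) M := heq ▸ mem_insert_self s(v, y) N
      exact Sym2.congr_right.1 ((mem_insert.1 this).resolve_right hvM)
    obtain rfl : M = N := by
      rw [← erase_insert hvM, heq, erase_insert (mk_notMem_of_mem_uncovered hq.2.2.1)]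
    rfl
  · intro M hM
    simp only [mem_filter, mem_uncovered, not_forall, not_not] at hM
    obtain ⟨hM, e, he, hve⟩ := hM
    obtain ⟨x, rfl⟩ := Sym2.mem_iff_exists.1 hve
    exact ⟨⟨M.erase s(v, x), x⟩, by
      simp [erase_mem_matchingsFinset hM, uncoveredGraph_erase_adj hM he], insert_erase he⟩

variable (G) in
-- Remove from `M` the edge `s(v, x)` that covers `v`.
theorem sum_compl_uncovered_eq_sum_insert {α : Type*} [AddCommMonoid α]
    (h : Finset (Sym2 V) → V → α) :
    ∑ M ∈ matchingsFinset G, ∑ v ∈ (uncovered M)ᶜ, h M v =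
      ∑ M ∈ matchingsFinset G, ∑ v, ∑ x ∈ (uncoveredGraph G M).neighborFinset v,
        h (insert s(v, x) M) v := by
  rw [sum_comm' (t' := univ) (s' := fun v => {M ∈ matchingsFinset G | v ∉ uncovered M})
    (by simp), sum_comm (t := univ)]
  exact sum_congr rfl fun v _ => sum_filter_notMem_uncovered G v fun M => h M v

end Switching

section Regular

variable {V : Type*} [Fintype V] [DecidableEq V] {G : SimpleGraph V} {M : Finset (Sym2 V)} {t : ℝ}

theorem card_insert_of_uncoveredGraph_adj {x y : V} (hxy : (uncoveredGraph G M).Adj x y) :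
    #(insert s(x, y) M) = #M + 1 :=
  card_insert_of_notMem (mk_notMem_of_mem_uncovered hxy.2.1)

omit [DecidableEq V] in
theorem sum_uncovered_degree :
    ∑ u ∈ uncovered M, ((uncoveredGraph G M).degree u : ℝ) =
      ∑ u, ((uncoveredGraph G M).degree u : ℝ) :=
  sum_subset (subset_univ _) fun u _ hu => by
    rw [degree_uncoveredGraph_of_notMem hu, Nat.cast_zero]

variable (G t) in
theorem sum_two_mul_card_mul_pow : ∑ M ∈ matchingsFinset G, 2 * (#M : ℝ) * t ^ #M =
    t * ∑ M ∈ matchingsFinset G,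
      t ^ #M * ∑ u ∈ uncovered M, ((uncoveredGraph G M).degree u : ℝ) := by
  rw [mul_sum]
  convert sum_compl_uncovered_eq_sum_insert G fun M _ => t ^ #M using 2 with M hM M
  · have hcard : #(uncovered M)ᶜ = 2 * #M := by
      rw [card_compl, ← card_uncovered_add_two_mul_card hM, Nat.add_sub_cancel_left]
    simp [hcard]
  · have hinsert (v : V) : ∑ x ∈ (uncoveredGraph G M).neighborFinset v, t ^ #(insert s(v, x) M) =
        t ^ (#M + 1) * (uncoveredGraph G M).degree v := by
      rw [sum_congr rfl fun x hx => by
        rw [card_insert_of_uncoveredGraph_adj ((SimpleGraph.mem_neighborFinset ..).1 hx)],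
        sum_const, nsmul_eq_mul, SimpleGraph.card_neighborFinset_eq_degree, mul_comm]
    rw [sum_congr rfl fun v _ => hinsert v, ← mul_sum, sum_uncovered_degree]
    ring

variable (G t) in
theorem card_mul_matchingPoly :
    Fintype.card V * matchingPoly G t = ∑ M ∈ matchingsFinset G,
      t ^ #M * ∑ u ∈ uncovered M, (1 + t * (uncoveredGraph G M).degree u) := by
  have hsplit : ∀ M ∈ matchingsFinset G,
      Fintype.card V * t ^ #M = t ^ #M * #(uncovered M) + 2 * #M * t ^ #M := by
    intro M hM
    rw [← card_uncovered_add_two_mul_card hM]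
    push_cast
    ring
  rw [matchingPoly, mul_sum, sum_congr rfl hsplit, sum_add_distrib, sum_two_mul_card_mul_pow,
    mul_sum, ← sum_add_distrib]
  refine sum_congr rfl fun M _ => ?_
  rw [sum_add_distrib, ← mul_sum, sum_const, nsmul_eq_mul]
  ring

theorem sum_compl_uncovered_sum_neighborFinset {d : ℕ} (hreg : G.IsRegularOfDegree d)
    (M : Finset (Sym2 V)) (a : V → ℝ) :
    ∑ v ∈ (uncovered M)ᶜ, ∑ u ∈ uncovered M ∩ G.neighborFinset v, a u =
      ∑ u ∈ uncovered M, (d - (uncoveredGraph G M).degree u) * a u := by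
  rw [sum_comm' (t' := uncovered M) (s' := fun u => G.neighborFinset u \ uncovered M)
    (by intro v u; simp only [mem_compl, mem_inter, SimpleGraph.mem_neighborFinset, mem_sdiff,
      G.adj_comm v u]; tauto)]
  refine sum_congr rfl fun u hu => ?_
  have hcard := card_neighborFinset_sdiff_uncovered (G := G) hu
  rw [hreg u] at hcard
  rw [sum_const, nsmul_eq_mul, ← hcard]
  push_cast
  ring

variable {d : ℕ} {f : ℕ → ℝ}

theorem degree_mul_le_sum_insert (hdeg : ∀ v, G.degree v ≤ d)
    (hf : AntitoneOn f (Set.Iic (d - 1))) (ht : 0 ≤ t) (M : Finset (Sym2 V)) (v : V) :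
    t ^ (#M + 1) * ∑ u ∈ (uncoveredGraph G M).neighborFinset v,
        (((uncoveredGraph G M).degree v - 1 : ℕ) : ℝ) * f ((uncoveredGraph G M).degree u - 1) ≤
      ∑ x ∈ (uncoveredGraph G M).neighborFinset v, t ^ #(insert s(v, x) M) *
        ∑ u ∈ uncovered (insert s(v, x) M) ∩ G.neighborFinset v,
          f ((uncoveredGraph G (insert s(v, x) M)).degree u) := by
  simp_rw [← nsmul_eq_mul, ← SimpleGraph.card_neighborFinset_eq_degree _ v]
  rw [← sum_sum_erase, mul_sum]
  refine sum_le_sum fun x hx => ?_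
  rw [SimpleGraph.mem_neighborFinset] at hx
  rw [card_insert_of_uncoveredGraph_adj hx, uncovered_insert_inter_neighborFinset hx]
  gcongr with u hu
  rw [mem_erase, SimpleGraph.mem_neighborFinset] at hu
  have hlt := degree_uncoveredGraph_insert_lt (x := x) hu.2.symm
  have hle := (degree_uncoveredGraph_le (G := G) (M := M) (u := u)).trans (hdeg u)
  exact hf (by grind) (by grind) (by omega)

omit [DecidableEq V] in
theorem sum_degree_mul_le_sum_neighborFinset (hdeg : ∀ v, G.degree v ≤ d)
    (hf : AntitoneOn f (Set.Iic (d - 1))) (M : Finset (Sym2 V)) :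
    ∑ u ∈ uncovered M, (uncoveredGraph G M).degree u *
        (((uncoveredGraph G M).degree u - 1 : ℕ) : ℝ) * f ((uncoveredGraph G M).degree u - 1) ≤
      ∑ v, ∑ u ∈ (uncoveredGraph G M).neighborFinset v,
        (((uncoveredGraph G M).degree v - 1 : ℕ) : ℝ) * f ((uncoveredGraph G M).degree u - 1) := by
  have hantivary : Antivary (fun u => (((uncoveredGraph G M).degree u - 1 : ℕ) : ℝ))
      (fun u => f ((uncoveredGraph G M).degree u - 1)) := by
    intro u v huv
    have hmem (w : V) : (uncoveredGraph G M).degree w - 1 ∈ Set.Iic (d - 1) :=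
      Nat.sub_le_sub_right (degree_uncoveredGraph_le.trans (hdeg w)) 1
    exact Nat.cast_le.2 (le_of_not_gt fun hlt => (hf (hmem u) (hmem v) hlt.le).not_gt huv)
  rw [sum_neighborFinset_comm]
  refine le_of_eq_of_le ?_ (sum_neighborFinset_mul_le_of_antivary _ hantivary)
  rw [sum_subset (subset_univ _) fun u _ hu => by
    rw [degree_uncoveredGraph_of_notMem hu, Nat.cast_zero, zero_mul, zero_mul]]
  refine sum_congr rfl fun u _ => ?_
  rw [sum_const, nsmul_eq_mul, SimpleGraph.card_neighborFinset_eq_degree, mul_assoc]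

theorem sum_uncovered_degree_mul_le (hreg : G.IsRegularOfDegree d)
    (hf : AntitoneOn f (Set.Iic (d - 1))) (ht : 0 ≤ t) :
    t * ∑ M ∈ matchingsFinset G, t ^ #M * ∑ u ∈ uncovered M, (uncoveredGraph G M).degree u *
        (((uncoveredGraph G M).degree u - 1 : ℕ) : ℝ) * f ((uncoveredGraph G M).degree u - 1) ≤
      ∑ M ∈ matchingsFinset G, t ^ #M * ∑ u ∈ uncovered M,
        (d - (uncoveredGraph G M).degree u) * f ((uncoveredGraph G M).degree u) := by
  have hdeg (v : V) : G.degree v ≤ d := (hreg v).le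
  have hswitch := sum_compl_uncovered_eq_sum_insert G fun M v =>
    t ^ #M * ∑ u ∈ uncovered M ∩ G.neighborFinset v, f ((uncoveredGraph G M).degree u)
  simp_rw [← mul_sum, sum_compl_uncovered_sum_neighborFinset hreg] at hswitch
  rw [hswitch, mul_sum]
  refine sum_le_sum fun M _ => ?_
  rw [← mul_assoc, ← pow_succ']
  refine (mul_le_mul_of_nonneg_left (sum_degree_mul_le_sum_neighborFinset hdeg hf M)
    (by positivity)).trans ?_
  rw [mul_sum]
  exact sum_le_sum fun v _ => degree_mul_le_sum_insert hdeg hf ht M v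

end Regular

section Biclique

/-- The total weight of the `k`-edge matchings of the complete bipartite graph `K_{m,m}`, every
edge having weight `t`. -/
noncomputable def bicliqueWeight (m : ℕ) (t : ℝ) (k : ℕ) : ℝ :=
  (m.choose k : ℝ) ^ 2 * k.factorial * t ^ k

/-- The matching polynomial of the complete bipartite graph `K_{m,m}`. -/
noncomputable def bicliquePoly (m : ℕ) (t : ℝ) : ℝ :=
  ∑ k ∈ range (m + 1), bicliqueWeight m t k

variable (m : ℕ) (t : ℝ)

theorem bicliquePoly_zero_right : bicliquePoly m 0 = 1 := by
  simp [bicliquePoly, bicliqueWeight, sum_range_succ']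

variable {t} in
theorem bicliquePoly_pos (ht : 0 ≤ t) : 0 < bicliquePoly m t := by
  refine sum_pos' (fun k _ => ?_) ⟨0, by simp, by simp [bicliqueWeight]⟩
  unfold bicliqueWeight
  positivity

theorem hasDerivAt_bicliquePoly_succ :
    HasDerivAt (bicliquePoly (m + 1)) ((m + 1) ^ 2 * bicliquePoly m t) t := by
  have hterm : HasDerivAt (bicliquePoly (m + 1)) (∑ k ∈ range (m + 2),
      ((m + 1).choose k : ℝ) ^ 2 * k.factorial * (k * t ^ (k - 1))) t :=
    HasDerivAt.fun_sum fun k _ => (hasDerivAt_pow k t).const_mul _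
  convert hterm using 1
  rw [sum_range_succ', bicliquePoly, mul_sum, Nat.cast_zero, zero_mul, mul_zero, add_zero]
  refine sum_congr rfl fun k _ => ?_
  have hchoose : ((m : ℝ) + 1) * m.choose k = (m + 1).choose (k + 1) * (k + 1) := mod_cast
    Nat.add_one_mul_choose_eq m k
  rw [bicliqueWeight, Nat.factorial_succ, Nat.add_sub_cancel]
  push_cast
  linear_combination ((m + 1) * m.choose k + (m + 1).choose (k + 1) * (k + 1)) *
    (k.factorial * t ^ k) * hchoose

theorem bicliqueWeight_succ_succ (k : ℕ) : bicliqueWeight (m + 1) t (k + 1) =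
    m.choose (k + 1) * (m + 1).choose (k + 1) * (k + 1).factorial * t ^ (k + 1) +
      bicliqueWeight m t k * ((m + 1) * t) := by
  have hchoose : ((m : ℝ) + 1) * m.choose k = (m + 1).choose (k + 1) * (k + 1) := mod_cast
    Nat.add_one_mul_choose_eq m k
  have hpascal : ((m + 1).choose (k + 1) : ℝ) = m.choose k + m.choose (k + 1) := mod_cast
    Nat.choose_succ_succ m k
  rw [bicliqueWeight, bicliqueWeight, Nat.factorial_succ]
  push_cast
  linear_combination (m + 1).choose (k + 1) * ((k + 1) * k.factorial * t ^ (k + 1)) * hpascal -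
    m.choose k * (k.factorial * t ^ (k + 1)) * hchoose

variable {m} in
theorem bicliqueWeight_mul_div {k : ℕ} (hk : k ≤ m) :
    bicliqueWeight m t k * ((m + 1) / (m - k + 1)) =
      m.choose k * (m + 1).choose k * k.factorial * t ^ k := by
  have hchoose : (m.choose k : ℝ) * (m + 1) = (m + 1).choose k * (m - k + 1) := by
    have := Nat.choose_mul_succ_eq m k
    rw [Nat.sub_add_comm hk] at this
    rw [← Nat.cast_sub hk]
    exact_mod_cast this
  have hne : (m - k + 1 : ℝ) ≠ 0 := by
    rw [← Nat.cast_sub hk]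
    positivity
  rw [bicliqueWeight, mul_div_assoc', div_eq_iff hne]
  linear_combination m.choose k * (k.factorial * t ^ k) * hchoose

-- A fixed vertex of `K_{m+1,m+1}` is either uncovered or matched in one of `m + 1` ways.
theorem bicliquePoly_succ : bicliquePoly (m + 1) t =
    ∑ k ∈ range (m + 1), bicliqueWeight m t k * ((m + 1) / (m - k + 1) + (m + 1) * t) := by
  let a (k : ℕ) : ℝ := m.choose k * (m + 1).choose k * k.factorial * t ^ k
  have hshift : ∑ k ∈ range (m + 1), a (k + 1) + 1 = ∑ k ∈ range (m + 1), a k := by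
    simpa [a] using (sum_range_succ' a (m + 1)).symm.trans (sum_range_succ a (m + 1))
  have hdiv : ∀ k ∈ range (m + 1), bicliqueWeight m t k * ((m + 1) / (m - k + 1)) = a k :=
    fun k hk => bicliqueWeight_mul_div t (Nat.lt_succ_iff.1 (mem_range.1 hk))
  have hzero : bicliqueWeight (m + 1) t 0 = 1 := by simp [bicliqueWeight]
  simp_rw [mul_add]
  rw [sum_add_distrib, sum_congr rfl hdiv, ← hshift, bicliquePoly, sum_range_succ', hzero,
    sum_congr rfl fun k _ => bicliqueWeight_succ_succ m t k, sum_add_distrib]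
  ring

theorem sum_bicliqueWeight_sub :
    ∑ s ∈ range (m + 1), bicliqueWeight m t (m - s) = bicliquePoly m t :=
  sum_range_reflect (bicliqueWeight m t) (m + 1)

theorem bicliquePoly_succ_eq_sum_sub : bicliquePoly (m + 1) t =
    ∑ s ∈ range (m + 1), bicliqueWeight m t (m - s) * ((m + 1) / (s + 1) + (m + 1) * t) := by
  rw [bicliquePoly_succ, ← sum_range_reflect]
  refine sum_congr rfl fun s hs => ?_
  rw [Nat.add_sub_cancel, Nat.cast_sub (Nat.lt_succ_iff.1 (mem_range.1 hs)), sub_sub_cancel]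

variable {m} in
theorem bicliqueWeight_sub_succ {i : ℕ} (hi : i < m) :
    t * (i + 1) ^ 2 * bicliqueWeight m t (m - (i + 1)) = (m - i) * bicliqueWeight m t (m - i) := by
  obtain ⟨k, rfl⟩ := Nat.exists_eq_add_of_lt hi
  have hchoose : ((i + k + 1).choose (k + 1) : ℝ) * (k + 1) = (i + k + 1).choose k * (i + 1) := by
    have := Nat.choose_succ_right_eq (i + k + 1) k
    rw [show i + k + 1 - k = i + 1 by omega] at this
    exact_mod_cast this
  rw [show i + k + 1 - (i + 1) = k by omega, show i + k + 1 - i = k + 1 by omega, bicliqueWeight,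
    bicliqueWeight, Nat.factorial_succ]
  push_cast
  linear_combination -((i + k + 1).choose k * (i + 1) + (i + k + 1).choose (k + 1) * (k + 1)) *
    (k.factorial * t ^ (k + 1)) * hchoose

end Biclique

section DualVar

/-- The dual variables of the occupancy linear program for `d = m + 1`: the function `f` for which
`(d - q) f(q) - t q (q - 1) f(q - 1)` is an affine function of `q` for `0 ≤ q ≤ d`. The ratio of
matching polynomials is forced by the case `q = d`, where `f(d)` drops out. The value at `i + 1` is
junk for `m ≤ i`. -/
noncomputable def dualVar (m : ℕ) (t : ℝ) : ℕ → ℝ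
  | 0 => 1
  | i + 1 => (m + 1 + ((m + 1) * t - bicliquePoly (m + 1) t / bicliquePoly m t) * (i + 1) +
      t * (i + 1) * i * dualVar m t i) / (m - i)

variable {m : ℕ} {t : ℝ}

theorem sub_mul_dualVar_succ {i : ℕ} (hi : i < m) : (m - i) * dualVar m t (i + 1) =
    m + 1 + ((m + 1) * t - bicliquePoly (m + 1) t / bicliquePoly m t) * (i + 1) +
      t * (i + 1) * i * dualVar m t i := by
  rw [dualVar, mul_div_cancel₀]
  exact sub_ne_zero.2 (mod_cast hi.ne')

theorem bicliqueWeight_mul_dualVar {i : ℕ} (hi : i ≤ m) :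
    t * i * bicliqueWeight m t (m - i) * dualVar m t i =
      ∑ s ∈ range i, bicliqueWeight m t (m - s) *
        ((m + 1) / (s + 1) + (m + 1) * t - bicliquePoly (m + 1) t / bicliquePoly m t) := by
  induction i with
  | zero => simp
  | succ i ih =>
    rw [sum_range_succ, ← ih (by omega), ← mul_right_inj' (Nat.cast_add_one_ne_zero (R := ℝ) i)]
    have hw := bicliqueWeight_sub_succ t (Nat.lt_of_succ_le hi)
    have hψ := sub_mul_dualVar_succ (t := t) (Nat.lt_of_succ_le hi)
    have hdiv : ((m : ℝ) + 1) / (i + 1) * (i + 1) = m + 1 := by field_simp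
    push_cast
    linear_combination dualVar m t (i + 1) * hw + bicliqueWeight m t (m - i) * (hψ - hdiv)

theorem dualVar_recurrence {i : ℕ} (ht : 0 ≤ t) (hi : i ≤ m) : (m - i) * dualVar m t (i + 1) =
    m + 1 + ((m + 1) * t - bicliquePoly (m + 1) t / bicliquePoly m t) * (i + 1) +
      t * (i + 1) * i * dualVar m t i := by
  rcases hi.lt_or_eq with hi | rfl
  · exact sub_mul_dualVar_succ hi
  have hsum : ∑ s ∈ range (i + 1), bicliqueWeight i t (i - s) *
      ((i + 1) / (s + 1) + (i + 1) * t - bicliquePoly (i + 1) t / bicliquePoly i t) = 0 := by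
    simp_rw [mul_sub]
    rw [sum_sub_distrib, ← bicliquePoly_succ_eq_sum_sub, ← sum_mul, sum_bicliqueWeight_sub,
      mul_div_cancel₀ _ (bicliquePoly_pos i ht).ne', sub_self]
  have hlast : bicliqueWeight i t (i - i) = 1 := by simp [bicliqueWeight]
  have hdiv : ((i : ℝ) + 1) / (i + 1) = 1 := div_self (Nat.cast_add_one_ne_zero i)
  rw [sum_range_succ, ← bicliqueWeight_mul_dualVar le_rfl, hlast, hdiv] at hsum
  linear_combination -(i + 1) * hsum

theorem dualVar_recurrence_pred {q : ℕ} (ht : 0 ≤ t) (hq : q ≤ m + 1) :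
    ((m + 1 : ℕ) - q) * dualVar m t q - t * (q * (q - 1 : ℕ) * dualVar m t (q - 1)) =
      (m + 1) * (1 + t * q) - bicliquePoly (m + 1) t / bicliquePoly m t * q := by
  cases q with
  | zero => simp [dualVar]
  | succ i =>
    rw [Nat.add_sub_cancel]
    push_cast
    linear_combination dualVar_recurrence ht (Nat.le_of_succ_le_succ hq)

theorem dualVar_difference {i : ℕ} (ht : 0 ≤ t) (hi : i < m) :
    (i + 1) * (m - (i + 1)) * (dualVar m t (i + 2) - dualVar m t (i + 1)) =
      t * (i + 1) * (i + 2) * i * (dualVar m t (i + 1) - dualVar m t i) +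
        (dualVar m t (i + 1) * (m + 1 + t * (i + 1) * (i + 2)) - (m + 1)) := by
  have hnext := dualVar_recurrence ht (Nat.succ_le_of_lt hi)
  push_cast at hnext
  linear_combination (i + 1) * hnext - (i + 2) * dualVar_recurrence ht hi.le

theorem threshold_lt_dualVar_succ {i : ℕ} (ht : 0 ≤ t)
    (hlt : m + 1 < dualVar m t (i + 1) * (m + 1 + t * (i + 1) * (i + 2)))
    (hincr : dualVar m t (i + 1) ≤ dualVar m t (i + 2)) :
    m + 1 < dualVar m t (i + 1 + 1) * (m + 1 + t * ((i + 1 : ℕ) + 1) * ((i + 1 : ℕ) + 2)) := by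
  have hpos : 0 < dualVar m t (i + 1) :=
    pos_of_mul_pos_left ((by positivity : (0 : ℝ) < m + 1).trans hlt) (by positivity)
  refine hlt.trans_le ?_
  push_cast
  gcongr <;> linarith

-- Above the threshold an increase would propagate up to the index `m`, where the left-hand side
-- of `dualVar_difference` vanishes.
theorem dualVar_succ_le_of_threshold_lt {i : ℕ} (ht : 0 ≤ t) (hi : i < m)
    (hlt : m + 1 < dualVar m t (i + 1) * (m + 1 + t * (i + 1) * (i + 2))) :
    dualVar m t (i + 1) ≤ dualVar m t i := by
  by_contra! hincr
  have hprod : 0 < (m - (i + 1) : ℝ) * (dualVar m t (i + 2) - dualVar m t (i + 1)) := by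
    refine pos_of_mul_pos_right (a := (i + 1 : ℝ)) ?_ (by positivity)
    rw [← mul_assoc, dualVar_difference ht hi]
    have := mul_nonneg (by positivity : 0 ≤ t * (i + 1) * (i + 2) * i) (sub_nonneg.2 hincr.le)
    linarith
  have him : i + 1 < m := by
    refine lt_of_le_of_ne hi fun h => hprod.ne' ?_
    rw [← h]
    simp
  have hincr' : dualVar m t (i + 1) < dualVar m t (i + 2) :=
    sub_pos.1 (pos_of_mul_pos_right hprod (sub_nonneg.2 (mod_cast him.le)))
  exact (dualVar_succ_le_of_threshold_lt ht him
    (threshold_lt_dualVar_succ ht hlt hincr'.le)).not_gt hincr'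
termination_by m - i

theorem dualVar_succ_le {i : ℕ} (ht : 0 ≤ t) (hi : i < m) :
    dualVar m t (i + 1) ≤ dualVar m t i := by
  by_contra! hincr
  refine (dualVar_succ_le_of_threshold_lt ht hi ?_).not_gt hincr
  cases i with
  | zero =>
    have hone : 1 < dualVar m t (0 + 1) := hincr
    exact (lt_mul_of_one_lt_left (by positivity) hone).trans_le (mul_le_mul_of_nonneg_left
      (le_add_of_nonneg_right (by positivity)) (zero_le_one.trans hone.le))
  | succ i =>
    have hdecr := dualVar_succ_le ht (Nat.lt_of_succ_lt hi)
    have hdiff := dualVar_difference ht (Nat.lt_of_succ_lt hi)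
    have hthreshold : m + 1 < dualVar m t (i + 1) * (m + 1 + t * (i + 1) * (i + 2)) := by
      have him : (i + 1 : ℝ) < m := mod_cast hi
      have hleft : 0 < (i + 1) * (m - (i + 1)) * (dualVar m t (i + 2) - dualVar m t (i + 1)) :=
        mul_pos (mul_pos (by positivity) (sub_pos.2 him)) (sub_pos.2 hincr)
      have hright : t * (i + 1) * (i + 2) * i * (dualVar m t (i + 1) - dualVar m t i) ≤ 0 :=
        mul_nonpos_of_nonneg_of_nonpos (by positivity) (sub_nonpos.2 hdecr)
      linarith
    exact threshold_lt_dualVar_succ ht hthreshold hincr.le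

theorem antitoneOn_dualVar (ht : 0 ≤ t) : AntitoneOn (dualVar m t) (Set.Iic m) :=
  antitoneOn_of_succ_le Set.ordConnected_Iic fun _ _ _ hi => dualVar_succ_le ht hi

end DualVar

section Matchings

variable {V : Type*} [Fintype V] [DecidableEq V] {G : SimpleGraph V} {t : ℝ}

variable (G) in
theorem matchingPoly_zero_right : matchingPoly G 0 = 1 := by
  rw [matchingPoly, sum_eq_single_of_mem ∅ empty_mem_matchingsFinset fun M _ hM => by
    simpa using hM, card_empty, pow_zero]

variable (G) in
theorem matchingPoly_one_right : matchingPoly G 1 = #(matchingsFinset G) := by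
  simp [matchingPoly]

variable (G) in
theorem matchingPoly_pos_s7 (ht : 0 ≤ t) : 0 < matchingPoly G t :=
  sum_pos' (fun M _ => by positivity) ⟨∅, empty_mem_matchingsFinset, by simp⟩

variable (G t) in
theorem hasDerivAt_matchingPoly_s7 : HasDerivAt (matchingPoly G)
    (∑ M ∈ matchingsFinset G, #M * t ^ (#M - 1)) t :=
  HasDerivAt.fun_sum fun M _ => hasDerivAt_pow #M t

theorem two_mul_sum_card_mul_pow (ht : t ≠ 0) :
    2 * ∑ M ∈ matchingsFinset G, #M * t ^ (#M - 1) =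
      ∑ M ∈ matchingsFinset G, t ^ #M * ∑ u ∈ uncovered M, ((uncoveredGraph G M).degree u : ℝ) := by
  rw [← mul_right_inj' ht, ← sum_two_mul_card_mul_pow, mul_sum, mul_sum]
  refine sum_congr rfl fun M _ => ?_
  rcases (#M).eq_zero_or_pos with h | h
  · simp [h]
  · rw [← mul_pow_sub_one h.ne' t]
    ring

theorem sum_degree_uncoveredGraph_le {m : ℕ} (hreg : G.IsRegularOfDegree (m + 1)) (ht : 0 ≤ t) :
    bicliquePoly (m + 1) t / bicliquePoly m t *
        ∑ M ∈ matchingsFinset G, t ^ #M * ∑ u ∈ uncovered M, ((uncoveredGraph G M).degree u : ℝ) ≤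
      (m + 1) * (Fintype.card V * matchingPoly G t) := by
  have htest := sum_uncovered_degree_mul_le hreg (antitoneOn_dualVar (m := m) ht) ht
  rw [← sub_nonneg, mul_sum, ← sum_sub_distrib] at htest
  rw [card_mul_matchingPoly, ← sub_nonneg, mul_sum, mul_sum, ← sum_sub_distrib]
  refine htest.trans_eq (sum_congr rfl fun M _ => ?_)
  rw [mul_left_comm t, mul_left_comm (_ / _), mul_left_comm (_ + 1), ← mul_sub, ← mul_sub]
  simp_rw [mul_sum, ← sum_sub_distrib]
  refine congrArg _ (sum_congr rfl fun u _ => ?_)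
  exact dualVar_recurrence_pred ht (degree_uncoveredGraph_le.trans_eq (hreg u))

theorem matchingPoly_pow_le {d : ℕ} (hreg : G.IsRegularOfDegree d) (ht : 0 ≤ t) :
    matchingPoly G t ^ (2 * d) ≤ bicliquePoly d t ^ Fintype.card V := by
  cases d with
  | zero => simp [bicliquePoly, bicliqueWeight]
  | succ m =>
    refine pow_le_pow_of_mul_deriv_le (fun x hx => matchingPoly_pos_s7 G hx)
      (fun x hx => bicliquePoly_pos (m + 1) hx) ?_ (fun x _ => hasDerivAt_matchingPoly_s7 G x)
      (fun x _ => hasDerivAt_bicliquePoly_succ m x) (fun x hx => ?_) ht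
    · rw [matchingPoly_zero_right, bicliquePoly_zero_right, one_pow, one_pow]
    · have hbound := sum_degree_uncoveredGraph_le hreg hx.le
      rw [← two_mul_sum_card_mul_pow hx.ne', div_mul_eq_mul_div,
        div_le_iff₀ (bicliquePoly_pos m hx.le)] at hbound
      push_cast
      linear_combination (m + 1) * hbound

end Matchings

theorem card_matchings_le_general {V : Type*} [Fintype V] [DecidableEq V] (G : SimpleGraph V)
    (d : ℕ) (hreg : G.IsRegularOfDegree d) :
    (matchingsFinset G).card ^ (2 * d) ≤
      (∑ k ∈ Finset.range (d + 1), (d.choose k) ^ 2 * k.factorial) ^ Fintype.card V := by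
  have hle := matchingPoly_pow_le hreg zero_le_one
  simp only [matchingPoly_one_right, bicliquePoly, bicliqueWeight, one_pow, mul_one] at hle
  exact_mod_cast hle

/-- Every $d$-regular graph on $n$ vertices (with $2d \mid n$) has at most
$\big(\sum_{k=0}^d \binom dk^2 k!\big)^{n/(2d)}$ matchings, the count for a
disjoint union of $n/(2d)$ copies of $K_{d,d}$. -/
theorem card_matchings_le {V : Type*} [Fintype V] [DecidableEq V] (G : SimpleGraph V)
    (d : ℕ) (hd : 1 ≤ d) (hreg : G.IsRegularOfDegree d)
    (hdvd : 2 * d ∣ Fintype.card V) :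
    (matchingsFinset G).card
      ≤ (∑ k ∈ Finset.range (d + 1), (d.choose k) ^ 2 * k.factorial) ^
          (Fintype.card V / (2 * d)) := by
  refine (Nat.pow_le_pow_iff_left (by omega : 2 * d ≠ 0)).1 ?_
  rw [← pow_mul, Nat.div_mul_cancel hdvd]
  exact card_matchings_le_general G d hreg
end
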